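/- Let p be a nonnegative integer. Then the p-th standardized moment of the demerit factor over binary sequences of length ℓ, μ_{p,ℓ}[ADF]/(μ_{2,ℓ}[ADF])^{p/2}, which equals the p-th standardized moment of ssac, converges as ℓ → ∞ to 0 if p is odd and to (p-1)!! if p is even; these limits coincide with the standardized moments of the standard normal distribution. -/

import Mathlib

/-!
Write the sequence as independent signs `ε_i`. The sum of squared autocorrelations is then a sum of
`ε_a ε_c ε_d ε_b` over the quadruples of positions with `a + b = d + c` (`ssac_eq`), and the demerit
factor is an affine function of it, so both have the same standardized moments (`ratio_eq`).

After subtracting the mean, its Walsh expansion has a part `X` homogeneous of degree four, coming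
from the quadruples of distinct positions, and a rest coming from quadruples in which two positions
cancel. The coefficients are bounded, the variance of `X` is at least of order `ℓ³`
(`eventually_sum_top_sq`), while that of the rest is `O(ℓ²)` (`sum_low_sq`). By hypercontractivity
(`hyper`) every moment of a polynomial of degree four in the signs is controlled by its variance, so
the rest does not influence the limit (`tendsto_perturbed`).

For `X`, normalised to variance one, the moments satisfy approximately the recursion
`E X^(n+2) = (n+1) E X^n` of the Gaussian moments (`stein`). Euler's identity gives
`4 X = ∑_i g_i`, where `g_i` collects the characters containing `i`. Flipping the `i`-th sign maps
`X` to `X - 2 g_i` and `g_i` to `-g_i`; symmetrising `E[g_i X^(n+1)]` under this flip and expanding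
to second order yields `(n+1) E[g_i² X^n]`, with an error governed by the sixth moment of `g_i`,
hence by the influence of `i`. What remains is to replace `Γ = ∑_i g_i²` by its mean `4`.

Both the smallness of the influences (`infl_le_of_codeg`) and the concentration of `Γ` (`gam_conc`)
follow from one combinatorial fact: three positions lie in boundedly many supports of `X`
(`codegree_le`). Indeed, the variance of `Γ` counts quadruples of supports with vanishing total
symmetric difference whose first two and whose last two members intersect and are distinct. There
are only `O(ℓ⁵)` of these (`linked_le`), against the square `ℓ⁶` of the variance.
-/

open Finset Filter

noncomputable section

/-- The binary sequence of length `ℓ` determined by sign choices `ε`. -/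
def seqOf (ℓ : ℕ) (ε : Fin ℓ → Bool) : ℤ → ℤ := fun j =>
  if h : 0 ≤ j ∧ j < (ℓ : ℤ) then (if ε ⟨j.toNat, by omega⟩ then 1 else -1) else 0

/-- Aperiodic autocorrelation of `f` at shift `s`. -/
def autocorr (f : ℤ → ℤ) (s : ℤ) : ℤ := ∑ᶠ j : ℤ, f (j + s) * f j

/-- The sum of squares of all aperiodic autocorrelations. -/
def ssac (f : ℤ → ℤ) : ℝ := ∑ᶠ s : ℤ, ((autocorr f s : ℝ)) ^ 2

/-- The demerit factor of `f`. -/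
def ADF (f : ℤ → ℤ) : ℝ :=
  (∑ᶠ s ∈ {s : ℤ | s ≠ 0}, ((autocorr f s : ℝ)) ^ 2) / (autocorr f 0 : ℝ) ^ 2

/-- Expectation of `v` over the `2^ℓ` binary sequences of length `ℓ`, each with
equal probability. -/
def expect (ℓ : ℕ) (v : (ℤ → ℤ) → ℝ) : ℝ :=
  (∑ ε : Fin ℓ → Bool, v (seqOf ℓ ε)) / 2 ^ ℓ

/-- The `p`-th central moment of `v` over binary sequences of length `ℓ`. -/
def centralMoment (p ℓ : ℕ) (v : (ℤ → ℤ) → ℝ) : ℝ :=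
  expect ℓ fun f => (v f - expect ℓ v) ^ p

/-! ### Expectation and Walsh characters -/

/-- The `±1` value of a Boolean sign choice. -/
def sgn (b : Bool) : ℝ := if b then 1 else -1

/-- The Walsh character `χ_T(ε) = ∏_{i ∈ T} ε_i` on sign vectors of length `ℓ`. -/
def chi {ℓ : ℕ} (T : Finset (Fin ℓ)) (ε : Fin ℓ → Bool) : ℝ := ∏ i ∈ T, sgn (ε i)

/-- Expectation over uniformly random sign vectors of length `ℓ`. -/
def ex {ℓ : ℕ} (F : (Fin ℓ → Bool) → ℝ) : ℝ := (∑ ε, F ε) / 2 ^ ℓ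

/-- Negation of the `i`-th sign. -/
def flipSign {ℓ : ℕ} (i : Fin ℓ) (ε : Fin ℓ → Bool) : Fin ℓ → Bool :=
  Function.update ε i (!ε i)

/-- The multilinear polynomial in the signs with Walsh coefficients `c`. -/
def walsh {ℓ : ℕ} (c : Finset (Fin ℓ) → ℝ) (ε : Fin ℓ → Bool) : ℝ := ∑ T, c T * chi T ε

section Expectation

variable {ℓ : ℕ} {F G : (Fin ℓ → Bool) → ℝ}

lemma ex_add : ex (fun ε => F ε + G ε) = ex F + ex G := by
  simp only [ex, sum_add_distrib, add_div]

lemma ex_sub : ex (fun ε => F ε - G ε) = ex F - ex G := by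
  simp only [ex, sum_sub_distrib, sub_div]

lemma ex_mul (a : ℝ) : ex (fun ε => a * F ε) = a * ex F := by
  simp only [ex, ← mul_sum, mul_div_assoc]

lemma ex_div (a : ℝ) : ex (fun ε => F ε / a) = ex F / a := by
  simp only [ex, ← sum_div, div_right_comm]

lemma ex_sum {κ : Type*} (s : Finset κ) (H : κ → (Fin ℓ → Bool) → ℝ) :
    ex (fun ε => ∑ k ∈ s, H k ε) = ∑ k ∈ s, ex (H k) := by
  simp only [ex]
  rw [sum_comm, sum_div]

lemma ex_const (a : ℝ) : ex (fun _ : Fin ℓ → Bool => a) = a := by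
  simp [ex]

lemma ex_mono (h : ∀ ε, F ε ≤ G ε) : ex F ≤ ex G := by
  unfold ex
  gcongr with ε
  exact h ε

lemma ex_nonneg (h : ∀ ε, 0 ≤ F ε) : 0 ≤ ex F :=
  div_nonneg (sum_nonneg fun ε _ => h ε) (by positivity)

lemma abs_ex_le : |ex F| ≤ ex (fun ε => |F ε|) := by
  unfold ex
  rw [abs_div, abs_of_pos (by positivity : (0 : ℝ) < 2 ^ ℓ)]
  gcongr
  exact abs_sum_le_sum_abs _ _

/-- Cauchy–Schwarz. -/
lemma ex_mul_le : ex (fun ε => F ε * G ε) ≤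
    √(ex fun ε => F ε ^ 2) * √(ex fun ε => G ε ^ 2) := by
  have h := Real.sum_mul_le_sqrt_mul_sqrt univ F G
  unfold ex
  rw [Real.sqrt_div (sum_nonneg fun _ _ => sq_nonneg _),
    Real.sqrt_div (sum_nonneg fun _ _ => sq_nonneg _), div_mul_div_comm,
    Real.mul_self_sqrt (by positivity)]
  gcongr

/-- Minkowski's inequality in `L^k`, in power form. -/
lemma ex_add_pow_le {k : ℕ} (hF : ∀ ε, 0 ≤ F ε) (hG : ∀ ε, 0 ≤ G ε) {a b : ℝ}
    (ha : 0 ≤ a) (hb : 0 ≤ b) (hFa : ex (fun ε => F ε ^ k) ≤ a ^ k)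
    (hGb : ex (fun ε => G ε ^ k) ≤ b ^ k) :
    ex (fun ε => (F ε + G ε) ^ k) ≤ (a + b) ^ k := by
  rcases Nat.eq_zero_or_pos k with rfl | hk
  · simp [ex_const]
  have hk1 : (1 : ℝ) ≤ k := by exact_mod_cast hk
  have hN : (0 : ℝ) < 2 ^ ℓ := by positivity
  have key := Real.Lp_add_le_of_nonneg (s := univ) (f := F) (g := G) hk1
    (fun ε _ => hF ε) (fun ε _ => hG ε)
  simp only [Real.rpow_natCast, one_div] at key
  have aux : ∀ {H : (Fin ℓ → Bool) → ℝ} {x : ℝ}, (∀ ε, 0 ≤ H ε) → 0 ≤ x →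
      ex (fun ε => H ε ^ k) ≤ x ^ k →
      (∑ ε, H ε ^ k) ^ ((k : ℝ)⁻¹) ≤ ((2 : ℝ) ^ ℓ) ^ ((k : ℝ)⁻¹) * x := by
    intro H x hH hx h
    rw [ex, div_le_iff₀ hN] at h
    calc (∑ ε, H ε ^ k) ^ ((k : ℝ)⁻¹) ≤ (x ^ k * 2 ^ ℓ) ^ ((k : ℝ)⁻¹) :=
          Real.rpow_le_rpow (sum_nonneg fun ε _ => pow_nonneg (hH ε) _) h (by positivity)
      _ = _ := by
          rw [Real.mul_rpow (by positivity) hN.le, Real.pow_rpow_inv_natCast hx hk.ne', mul_comm]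
  have h2 := key.trans (add_le_add (aux hF ha hFa) (aux hG hb hGb))
  rw [← mul_add] at h2
  have hs : 0 ≤ ∑ ε, (F ε + G ε) ^ k :=
    sum_nonneg fun ε _ => pow_nonneg (add_nonneg (hF ε) (hG ε)) _
  have h3 := pow_le_pow_left₀ (Real.rpow_nonneg hs _) h2 k
  rw [Real.rpow_inv_natCast_pow hs hk.ne', mul_pow, Real.rpow_inv_natCast_pow hN.le hk.ne'] at h3
  rw [ex, div_le_iff₀ hN, mul_comm]
  exact h3

end Expectation

section Characters

variable {ℓ : ℕ}

lemma sgn_mul_self (b : Bool) : sgn b * sgn b = 1 := by cases b <;> simp [sgn]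

lemma sgn_not (b : Bool) : sgn (!b) = -sgn b := by cases b <;> simp [sgn]

lemma flipSign_flipSign (i : Fin ℓ) (ε : Fin ℓ → Bool) : flipSign i (flipSign i ε) = ε := by
  simp [flipSign]

lemma ex_flip (i : Fin ℓ) (F : (Fin ℓ → Bool) → ℝ) : ex (fun ε => F (flipSign i ε)) = ex F := by
  unfold ex
  congr 1
  exact Equiv.sum_comp (Function.Involutive.toPerm (flipSign i) (flipSign_flipSign i)) F

lemma chi_flip (i : Fin ℓ) (T : Finset (Fin ℓ)) (ε : Fin ℓ → Bool) :
    chi T (flipSign i ε) = if i ∈ T then -chi T ε else chi T ε := by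
  unfold chi
  split_ifs with h
  · rw [← mul_prod_erase _ _ h, ← mul_prod_erase _ (fun j => sgn (ε j)) h]
    rw [prod_congr rfl (g := fun j => sgn (ε j))]
    · simp [flipSign, sgn_not]
    · intro j hj
      simp [flipSign, Function.update_of_ne (ne_of_mem_erase hj)]
  · refine prod_congr rfl fun j hj => ?_
    have : j ≠ i := fun e => h (e ▸ hj)
    simp [flipSign, Function.update_of_ne this]

lemma chi_empty (ε : Fin ℓ → Bool) : chi ∅ ε = 1 := by simp [chi]

lemma chi_singleton (i : Fin ℓ) (ε : Fin ℓ → Bool) : chi {i} ε = sgn (ε i) := by simp [chi]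

lemma chi_insert {i : Fin ℓ} {T : Finset (Fin ℓ)} (h : i ∉ T) (ε : Fin ℓ → Bool) :
    chi (insert i T) ε = sgn (ε i) * chi T ε := by
  simp [chi, prod_insert h]

lemma chi_mul (S T : Finset (Fin ℓ)) (ε : Fin ℓ → Bool) :
    chi S ε * chi T ε = chi (symmDiff S T) ε := by
  unfold chi
  have hS : S = (S \ T) ∪ (S ∩ T) := (sdiff_union_inter S T).symm
  have hT : T = (T \ S) ∪ (S ∩ T) := by rw [inter_comm]; exact (sdiff_union_inter T S).symm
  have e1 : ∏ i ∈ S, sgn (ε i) = (∏ i ∈ S \ T, sgn (ε i)) * ∏ i ∈ S ∩ T, sgn (ε i) := by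
    conv_lhs => rw [hS]
    exact prod_union (disjoint_sdiff_inter S T)
  have e2 : ∏ i ∈ T, sgn (ε i) = (∏ i ∈ T \ S, sgn (ε i)) * ∏ i ∈ S ∩ T, sgn (ε i) := by
    conv_lhs => rw [hT]
    rw [inter_comm]
    exact prod_union (disjoint_sdiff_inter T S)
  have e3 : (∏ i ∈ S ∩ T, sgn (ε i)) * ∏ i ∈ S ∩ T, sgn (ε i) = 1 := by
    rw [← prod_mul_distrib]
    exact prod_eq_one fun i _ => sgn_mul_self _
  rw [e1, e2, symmDiff_def, sup_eq_union, prod_union disjoint_sdiff_sdiff]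
  linear_combination (∏ i ∈ S \ T, sgn (ε i)) * (∏ i ∈ T \ S, sgn (ε i)) * e3

lemma ex_chi (T : Finset (Fin ℓ)) : ex (chi T) = if T = ∅ then 1 else 0 := by
  split_ifs with h
  · subst h
    simp only [funext chi_empty, ex_const]
  · obtain ⟨i, hi⟩ := nonempty_iff_ne_empty.2 h
    have := ex_flip i (chi T)
    simp only [chi_flip, hi, if_true] at this
    have h2 := ex_mul (F := chi T) (-1)
    simp only [neg_one_mul] at h2
    linarith

lemma ex_chi_mul (S T : Finset (Fin ℓ)) :
    ex (fun ε => chi S ε * chi T ε) = if S = T then 1 else 0 := by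
  simp only [chi_mul]
  rw [show (fun ε => chi (symmDiff S T) ε) = chi (symmDiff S T) from rfl, ex_chi]
  congr 1
  rw [← bot_eq_empty, symmDiff_eq_bot]

/-- Orthonormality of the characters, for sums in which a character may occur repeatedly. -/
lemma ex_sq_sum {κ : Type*} [DecidableEq κ] (A : Finset κ) (x : κ → ℝ)
    (P : κ → Finset (Fin ℓ)) :
    ex (fun ε => (∑ a ∈ A, x a * chi (P a) ε) ^ 2) =
      ∑ a ∈ A, ∑ b ∈ A, if P a = P b then x a * x b else 0 := by
  have : ∀ ε, (∑ a ∈ A, x a * chi (P a) ε) ^ 2 =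
      ∑ a ∈ A, ∑ b ∈ A, (x a * x b) * (chi (P a) ε * chi (P b) ε) := by
    intro ε
    rw [sq, sum_mul_sum]
    refine sum_congr rfl fun a _ => sum_congr rfl fun b _ => by ring
  simp only [this, ex_sum, ex_mul, ex_chi_mul, mul_ite, mul_one, mul_zero]

/-- Parseval's identity. -/
lemma ex_walsh_sq (c : Finset (Fin ℓ) → ℝ) : ex (fun ε => walsh c ε ^ 2) = ∑ T, c T ^ 2 := by
  have h := ex_sq_sum univ c id
  simp only [id] at h
  unfold walsh
  rw [h]
  simp [sq]

lemma ex_walsh (c : Finset (Fin ℓ) → ℝ) : ex (walsh c) = c ∅ := by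
  unfold walsh
  simp only [ex_sum, ex_mul]
  rw [sum_congr rfl (g := fun T => c T * if T = ∅ then 1 else 0)]
  · simp
  · intro T _
    rw [← ex_chi T]

end Characters

/-! ### Hypercontractivity -/

section Hypercontractivity

variable {ℓ : ℕ}

/-- The two-point inequality `((a+b)^{2k} + (a-b)^{2k})/2 ≤ (a² + Kb²)^k`, proved together with
a bound on the odd part so that the induction on `k` closes. -/
lemma two_point_aux (a b K : ℝ) (hK : 1 ≤ K) : ∀ k : ℕ, 4 * (k : ℝ) + 1 ≤ K →
    ((a + b) ^ (2 * k) + (a - b) ^ (2 * k)) / 2 ≤ (a ^ 2 + K * b ^ 2) ^ k ∧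
    ((a + b) ^ (2 * (k + 1)) + (a - b) ^ (2 * (k + 1))) / 2 ≤ (a ^ 2 + K * b ^ 2) ^ (k + 1) ∧
    |((a + b) ^ (2 * (k + 1)) - (a - b) ^ (2 * (k + 1))) / 2| ≤
      2 * (k + 1) * |a * b| * (a ^ 2 + K * b ^ 2) ^ k := by
  intro k
  induction k with
  | zero =>
    intro _
    refine ⟨by norm_num, by nlinarith [sq_nonneg b], ?_⟩
    have : ((a + b) ^ (2 * (0 + 1)) - (a - b) ^ (2 * (0 + 1))) / 2 = 2 * (a * b) := by ring
    rw [this, abs_mul]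
    simp
  | succ k ih =>
    intro hk
    push_cast at hk
    obtain ⟨-, h1, h2⟩ := ih (by linarith)
    refine ⟨h1, ?_, ?_⟩
    · set Q := a ^ 2 + K * b ^ 2 with hQ
      set E := ((a + b) ^ (2 * (k + 1)) + (a - b) ^ (2 * (k + 1))) / 2 with hE
      set O := ((a + b) ^ (2 * (k + 1)) - (a - b) ^ (2 * (k + 1))) / 2 with hO
      have hQ0 : 0 ≤ Q := by positivity
      have e : ((a + b) ^ (2 * (k + 1 + 1)) + (a - b) ^ (2 * (k + 1 + 1))) / 2 =
          (a ^ 2 + b ^ 2) * E + 2 * (a * b) * O := by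
        rw [hE, hO]; ring
      rw [e]
      have h3 : 2 * (a * b) * O ≤ 2 * |a * b| * (2 * (k + 1) * |a * b| * Q ^ k) := by
        calc 2 * (a * b) * O ≤ |2 * (a * b) * O| := le_abs_self _
          _ = 2 * |a * b| * |O| := by rw [abs_mul, abs_mul]; norm_num
          _ ≤ _ := by gcongr
      have h4 : |a * b| * |a * b| = a ^ 2 * b ^ 2 := by rw [abs_mul_abs_self]; ring
      calc (a ^ 2 + b ^ 2) * E + 2 * (a * b) * O
          ≤ (a ^ 2 + b ^ 2) * Q ^ (k + 1) + 2 * |a * b| * (2 * (k + 1) * |a * b| * Q ^ k) := by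
            gcongr
        _ = Q ^ k * ((a ^ 2 + b ^ 2) * Q + 4 * (k + 1) * (a ^ 2 * b ^ 2)) := by
            rw [← h4]; ring
        _ ≤ Q ^ k * (Q * Q) := by
            gcongr
            have h5 : 0 ≤ (K - (4 * (k + 1) + 1)) * (a ^ 2 * b ^ 2) :=
              mul_nonneg (by linarith) (by positivity)
            have h6 : 0 ≤ K * (K - 1) * (b ^ 2 * b ^ 2) :=
              mul_nonneg (mul_nonneg (by linarith) (by linarith)) (by positivity)
            rw [hQ]
            nlinarith
        _ = Q ^ (k + 1 + 1) := by ring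
    · set Q := a ^ 2 + K * b ^ 2 with hQ
      set E := ((a + b) ^ (2 * (k + 1)) + (a - b) ^ (2 * (k + 1))) / 2 with hE
      set O := ((a + b) ^ (2 * (k + 1)) - (a - b) ^ (2 * (k + 1))) / 2 with hO
      have hQ0 : 0 ≤ Q := by positivity
      have hE0 : 0 ≤ E := by
        rw [hE, pow_mul, pow_mul]; positivity
      have e : ((a + b) ^ (2 * (k + 1 + 1)) - (a - b) ^ (2 * (k + 1 + 1))) / 2 =
          (a ^ 2 + b ^ 2) * O + 2 * (a * b) * E := by
        rw [hE, hO]; ring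
      have h7 : a ^ 2 + b ^ 2 ≤ Q := by
        rw [hQ]; nlinarith [sq_nonneg b]
      rw [e]
      calc |(a ^ 2 + b ^ 2) * O + 2 * (a * b) * E|
          ≤ |(a ^ 2 + b ^ 2) * O| + |2 * (a * b) * E| := abs_add_le _ _
        _ = (a ^ 2 + b ^ 2) * |O| + 2 * |a * b| * E := by
            rw [abs_mul, abs_mul, abs_mul, abs_of_nonneg hE0,
              abs_of_nonneg (by positivity : 0 ≤ a ^ 2 + b ^ 2)]
            norm_num
        _ ≤ Q * (2 * (k + 1) * |a * b| * Q ^ k) + 2 * |a * b| * Q ^ (k + 1) := by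
            gcongr
        _ = _ := by push_cast; ring

lemma two_point (a b : ℝ) (k : ℕ) :
    ((a + b) ^ (2 * k) + (a - b) ^ (2 * k)) / 2 ≤ (a ^ 2 + (4 * k + 1) * b ^ 2) ^ k :=
  (two_point_aux a b (4 * k + 1) (by linarith [(Nat.cast_nonneg k : (0 : ℝ) ≤ k)]) k le_rfl).1

/-- Flipping a sign that occurs in no character of the sum leaves the sum unchanged. -/
lemma sum_chi_flip {i : Fin ℓ} {S : Finset (Fin ℓ)} (hi : i ∉ S) (c : Finset (Fin ℓ) → ℝ)
    (ε : Fin ℓ → Bool) :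
    ∑ T ∈ S.powerset, c T * chi T (flipSign i ε) = ∑ T ∈ S.powerset, c T * chi T ε := by
  refine sum_congr rfl fun T hT => ?_
  rw [chi_flip, if_neg fun h => hi (mem_powerset.1 hT h)]

/-- Hypercontractivity for polynomials in the signs indexed by `S`. -/
lemma hyper_aux (k : ℕ) (S : Finset (Fin ℓ)) : ∀ c : Finset (Fin ℓ) → ℝ,
    ex (fun ε => (∑ T ∈ S.powerset, c T * chi T ε) ^ (2 * k)) ≤
      (∑ T ∈ S.powerset, (4 * (k : ℝ) + 1) ^ #T * c T ^ 2) ^ k := by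
  induction S using Finset.induction_on with
  | empty =>
    intro c
    simp [chi_empty, ex_const, pow_mul]
  | insert i S hi ih =>
    intro c
    set A : (Fin ℓ → Bool) → ℝ := fun ε => ∑ T ∈ S.powerset, c T * chi T ε with hA
    set B : (Fin ℓ → Bool) → ℝ := fun ε => ∑ T ∈ S.powerset, c (insert i T) * chi T ε with hB
    have hnot : ∀ T ∈ S.powerset, i ∉ T := fun T hT h => hi (mem_powerset.1 hT h)
    have hsplit : ∀ ε, ∑ T ∈ (insert i S).powerset, c T * chi T ε = A ε + sgn (ε i) * B ε := by
      intro ε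
      rw [sum_powerset_insert hi, hA, hB]
      simp only [mul_sum]
      congr 1
      refine sum_congr rfl fun T hT => ?_
      rw [chi_insert (hnot T hT)]
      ring
    have hflip : ∀ ε, ∑ T ∈ (insert i S).powerset, c T * chi T (flipSign i ε) =
        A ε - sgn (ε i) * B ε := by
      intro ε
      rw [hsplit, hA, hB]
      simp only [sum_chi_flip hi]
      simp [flipSign, sgn_not, sub_eq_add_neg]
    have hK : (0 : ℝ) ≤ 4 * k + 1 := by positivity
    calc ex (fun ε => (∑ T ∈ (insert i S).powerset, c T * chi T ε) ^ (2 * k))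
        = ex (fun ε => ((A ε + sgn (ε i) * B ε) ^ (2 * k) +
            (A ε - sgn (ε i) * B ε) ^ (2 * k)) / 2) := by
          rw [ex_div, ex_add]
          simp only [← hsplit, ← hflip]
          rw [ex_flip i (fun ε => (∑ T ∈ (insert i S).powerset, c T * chi T ε) ^ (2 * k))]
          ring
      _ ≤ ex (fun ε => (A ε ^ 2 + (4 * k + 1) * B ε ^ 2) ^ k) := by
          refine ex_mono fun ε => (two_point _ _ k).trans (le_of_eq ?_)
          have := sgn_mul_self (ε i)
          congr 2
          linear_combination ((4 * k + 1) * B ε ^ 2) * this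
      _ ≤ ((∑ T ∈ S.powerset, (4 * (k : ℝ) + 1) ^ #T * c T ^ 2) +
            (4 * k + 1) * ∑ T ∈ S.powerset, (4 * (k : ℝ) + 1) ^ #T * c (insert i T) ^ 2) ^ k := by
          refine ex_add_pow_le (fun ε => sq_nonneg _) (fun ε => by positivity)
            (sum_nonneg fun T _ => by positivity)
            (mul_nonneg hK (sum_nonneg fun T _ => by positivity)) ?_ ?_
          · simpa only [← pow_mul] using ih c
          · simp only [mul_pow, ex_mul]
            gcongr
            simpa only [← pow_mul] using ih fun T => c (insert i T)
      _ = _ := by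
          rw [sum_powerset_insert hi, mul_sum]
          congr 2
          refine sum_congr rfl fun T hT => ?_
          rw [card_insert_of_notMem (hnot T hT)]
          ring

/-- Hypercontractivity (Bonami's inequality) for polynomials of degree at most `4`: every even
moment is controlled by the second one. -/
lemma hyper (k : ℕ) (c : Finset (Fin ℓ) → ℝ) (hc : ∀ T, c T ≠ 0 → #T ≤ 4) :
    ex (fun ε => walsh c ε ^ (2 * k)) ≤ ((4 * (k : ℝ) + 1) ^ 4 * ∑ T, c T ^ 2) ^ k := by
  have h := hyper_aux k univ c
  rw [powerset_univ] at h
  refine h.trans ?_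
  rw [mul_sum]
  have h1 : (1 : ℝ) ≤ 4 * k + 1 := by linarith [(Nat.cast_nonneg k : (0 : ℝ) ≤ k)]
  refine pow_le_pow_left₀ (sum_nonneg fun T _ => by positivity) (sum_le_sum fun T _ => ?_) k
  by_cases hT : c T = 0
  · simp [hT]
  · have := pow_le_pow_right₀ h1 (hc T hT)
    gcongr

end Hypercontractivity

/-! ### Stein's recursion for homogeneous polynomials of degree four -/

section Stein

variable {ℓ : ℕ}

/-- The Walsh coefficients of `ε_i ∂_i F` when `F` has coefficients `c`: only the characters that
contain `i` are kept. -/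
def part (i : Fin ℓ) (c : Finset (Fin ℓ) → ℝ) : Finset (Fin ℓ) → ℝ :=
  fun T => if i ∈ T then c T else 0

/-- The influence of the `i`-th sign on the polynomial with Walsh coefficients `c`. -/
def infl (c : Finset (Fin ℓ) → ℝ) (i : Fin ℓ) : ℝ := ∑ T, part i c T ^ 2

/-- The (rescaled) carré du champ `Γ = ∑_i (ε_i ∂_i F)²`. -/
def gam (c : Finset (Fin ℓ) → ℝ) (ε : Fin ℓ → Bool) : ℝ := ∑ i, walsh (part i c) ε ^ 2

lemma part_ne_zero {i : Fin ℓ} {c : Finset (Fin ℓ) → ℝ} {T : Finset (Fin ℓ)}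
    (h : part i c T ≠ 0) : i ∈ T ∧ c T ≠ 0 := by
  unfold part at h
  split_ifs at h with h1
  · exact ⟨h1, h⟩
  · exact absurd rfl h

lemma walsh_flip (i : Fin ℓ) (c : Finset (Fin ℓ) → ℝ) (ε : Fin ℓ → Bool) :
    walsh c (flipSign i ε) = walsh c ε - 2 * walsh (part i c) ε := by
  unfold walsh
  rw [mul_sum, ← sum_sub_distrib]
  refine sum_congr rfl fun T _ => ?_
  rw [chi_flip]
  unfold part
  split_ifs <;> ring

lemma walsh_part_flip (i : Fin ℓ) (c : Finset (Fin ℓ) → ℝ) (ε : Fin ℓ → Bool) :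
    walsh (part i c) (flipSign i ε) = -walsh (part i c) ε := by
  have : part i (part i c) = part i c := by
    ext T; unfold part; split_ifs <;> rfl
  rw [walsh_flip, this]
  ring

lemma sum_part (c : Finset (Fin ℓ) → ℝ) (T : Finset (Fin ℓ)) (f : ℝ → ℝ) (hf : f 0 = 0) :
    ∑ i, f (part i c T) = #T * f (c T) := by
  have : ∀ i, f (part i c T) = if i ∈ T then f (c T) else 0 := by
    intro i; unfold part; split_ifs <;> simp [hf]
  simp [this]

/-- Euler's identity for homogeneous polynomials of degree `4`. -/
lemma sum_walsh_part {c : Finset (Fin ℓ) → ℝ} (hc : ∀ T, c T ≠ 0 → #T = 4)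
    (ε : Fin ℓ → Bool) : ∑ i, walsh (part i c) ε = 4 * walsh c ε := by
  unfold walsh
  rw [sum_comm, mul_sum]
  refine sum_congr rfl fun T _ => ?_
  have e := sum_part c T id rfl
  simp only [id] at e
  rw [← sum_mul, e]
  by_cases h : c T = 0
  · simp [h]
  · rw [hc T h]; push_cast; ring

lemma sum_infl {c : Finset (Fin ℓ) → ℝ} (hc : ∀ T, c T ≠ 0 → #T = 4) :
    ∑ i, infl c i = 4 * ∑ T, c T ^ 2 := by
  unfold infl
  rw [sum_comm, mul_sum]
  refine sum_congr rfl fun T _ => ?_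
  rw [sum_part c T (fun x => x ^ 2) (by norm_num)]
  by_cases h : c T = 0
  · simp [h]
  · rw [hc T h]; norm_num

lemma infl_nonneg (c : Finset (Fin ℓ) → ℝ) (i : Fin ℓ) : 0 ≤ infl c i :=
  sum_nonneg fun _ _ => sq_nonneg _

lemma infl_le (c : Finset (Fin ℓ) → ℝ) (i : Fin ℓ) : infl c i ≤ ∑ T, c T ^ 2 := by
  refine sum_le_sum fun T _ => ?_
  unfold part
  split_ifs
  · exact le_rfl
  · rw [zero_pow two_ne_zero]; positivity

/-- Second order Taylor estimate for powers. The summand `1` keeps the bound monotone in `n`. -/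
lemma taylor_pow (x h : ℝ) (n : ℕ) :
    |(x + h) ^ (n + 1) - x ^ (n + 1) - (n + 1) * h * x ^ n| ≤
      (n + 1) ^ 2 * h ^ 2 * (1 + |x| + |h|) ^ n := by
  induction n with
  | zero =>
    have : (x + h) ^ (0 + 1) - x ^ (0 + 1) - ((0 : ℕ) + 1) * h * x ^ 0 = 0 := by
      push_cast; ring
    rw [this, abs_zero]
    positivity
  | succ n ih =>
    set W := 1 + |x| + |h| with hW
    have hx := abs_nonneg x
    have hh := abs_nonneg h
    have hW0 : 0 ≤ W := by positivity
    have e : (x + h) ^ (n + 1 + 1) - x ^ (n + 1 + 1) - ((n + 1 : ℕ) + 1) * h * x ^ (n + 1) =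
        (x + h) * ((x + h) ^ (n + 1) - x ^ (n + 1) - (n + 1) * h * x ^ n) +
          (n + 1) * h ^ 2 * x ^ n := by
      push_cast; ring
    rw [e]
    have h1 : |x + h| ≤ W := (abs_add_le x h).trans (by linarith)
    have h2 : |x ^ n| ≤ W ^ (n + 1) := by
      rw [abs_pow]
      calc |x| ^ n ≤ W ^ n := by gcongr; linarith
        _ ≤ W ^ (n + 1) := pow_le_pow_right₀ (by linarith) (Nat.le_succ n)
    calc _ ≤ |(x + h)| * |(x + h) ^ (n + 1) - x ^ (n + 1) - (n + 1) * h * x ^ n| +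
          (n + 1) * h ^ 2 * |x ^ n| := by
          refine (abs_add_le _ _).trans (le_of_eq ?_)
          rw [abs_mul, abs_mul ((n + 1) * h ^ 2),
            abs_of_nonneg (by positivity : 0 ≤ ((n : ℝ) + 1) * h ^ 2)]
      _ ≤ W * ((n + 1) ^ 2 * h ^ 2 * W ^ n) + (n + 1) * h ^ 2 * W ^ (n + 1) := by gcongr
      _ = ((n + 1) ^ 2 + (n + 1)) * (h ^ 2 * W ^ (n + 1)) := by ring
      _ ≤ ((n + 1 : ℕ) + 1) ^ 2 * (h ^ 2 * W ^ (n + 1)) := by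
          have : 0 ≤ h ^ 2 * W ^ (n + 1) := by positivity
          gcongr
          push_cast
          nlinarith [(Nat.cast_nonneg n : (0 : ℝ) ≤ n)]
      _ = _ := by ring

/-- First order Taylor estimate for powers. -/
lemma taylor_pow_one (x h : ℝ) (n : ℕ) :
    |(x + h) ^ n - x ^ n| ≤ n * |h| * (1 + |x| + |h|) ^ n := by
  induction n with
  | zero => simp
  | succ n ih =>
    set W := 1 + |x| + |h| with hW
    have hx := abs_nonneg x
    have hh := abs_nonneg h
    have hW0 : 0 ≤ W := by positivity
    have e : (x + h) ^ (n + 1) - x ^ (n + 1) = (x + h) * ((x + h) ^ n - x ^ n) + h * x ^ n := by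
      ring
    rw [e]
    have h1 : |x + h| ≤ W := (abs_add_le x h).trans (by linarith)
    have h2 : |x ^ n| ≤ W ^ (n + 1) := by
      rw [abs_pow]
      calc |x| ^ n ≤ W ^ n := by gcongr; linarith
        _ ≤ W ^ (n + 1) := pow_le_pow_right₀ (by linarith) (Nat.le_succ n)
    calc _ ≤ |x + h| * |(x + h) ^ n - x ^ n| + |h| * |x ^ n| := by
          refine (abs_add_le _ _).trans (le_of_eq ?_)
          rw [abs_mul, abs_mul]
      _ ≤ W * (n * |h| * W ^ n) + |h| * W ^ (n + 1) := by gcongr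
      _ = _ := by push_cast; ring

lemma ex_one_add_pow_le (F G : (Fin ℓ → Bool) → ℝ) (n : ℕ) :
    ex (fun ε => ((1 + |F ε| + |G ε|) ^ n) ^ 2) ≤
      9 ^ n * (1 + ex (fun ε => F ε ^ (2 * n)) + ex (fun ε => G ε ^ (2 * n))) := by
  calc _ ≤ ex (fun ε => 9 ^ n * (1 + F ε ^ (2 * n) + G ε ^ (2 * n))) := by
        refine ex_mono fun ε => ?_
        have h1 : (1 + |F ε| + |G ε|) ^ 2 ≤ 3 * (1 + F ε ^ 2 + G ε ^ 2) := by
          nlinarith [sq_nonneg (1 - |F ε|), sq_nonneg (1 - |G ε|), sq_nonneg (|F ε| - |G ε|),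
            sq_abs (F ε), sq_abs (G ε)]
        -- The largest of the three summands carries the bound.
        have h2 : ∀ a b : ℝ, 0 ≤ a → 0 ≤ b → (1 + a + b) ^ n ≤ 3 ^ n * (1 + a ^ n + b ^ n) := by
          intro a b ha hb
          set M := max 1 (max a b) with hM
          have m1 : 1 ≤ M := le_max_left _ _
          have m2 : a ≤ M := (le_max_left _ _).trans (le_max_right _ _)
          have m3 : b ≤ M := (le_max_right _ _).trans (le_max_right _ _)
          have m4 : M ^ n ≤ 1 + a ^ n + b ^ n := by
            have := pow_nonneg ha n
            have := pow_nonneg hb n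
            rcases max_choice 1 (max a b) with h | h
            · rw [hM, h, one_pow]; linarith
            · rcases max_choice a b with h' | h' <;> rw [hM, h, h'] <;> linarith
          calc (1 + a + b) ^ n ≤ (3 * M) ^ n := by gcongr; linarith
            _ = 3 ^ n * M ^ n := mul_pow _ _ _
            _ ≤ _ := by gcongr
        calc ((1 + |F ε| + |G ε|) ^ n) ^ 2 = ((1 + |F ε| + |G ε|) ^ 2) ^ n := by
              rw [← pow_mul, ← pow_mul, mul_comm]
          _ ≤ (3 * (1 + F ε ^ 2 + G ε ^ 2)) ^ n := by gcongr
          _ = 3 ^ n * (1 + F ε ^ 2 + G ε ^ 2) ^ n := mul_pow _ _ _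
          _ ≤ 3 ^ n * (3 ^ n * (1 + (F ε ^ 2) ^ n + (G ε ^ 2) ^ n)) := by
              gcongr
              exact h2 _ _ (sq_nonneg _) (sq_nonneg _)
          _ = _ := by
              rw [← mul_assoc, ← mul_pow, pow_mul, pow_mul]; norm_num
    _ = _ := by rw [ex_mul, ex_add, ex_add, ex_const]

/-- The size of the `n`-th hypercontractive constant in degree `4`. -/
def hypC (n : ℕ) : ℝ := ((4 * (n : ℝ) + 1) ^ 4) ^ n

lemma hypC_nonneg (n : ℕ) : 0 ≤ hypC n := by unfold hypC; positivity

lemma hyper_one (n : ℕ) {c : Finset (Fin ℓ) → ℝ} (hc : ∀ T, c T ≠ 0 → #T ≤ 4)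
    (h1 : ∑ T, c T ^ 2 ≤ 1) : ex (fun ε => walsh c ε ^ (2 * n)) ≤ hypC n := by
  refine (hyper n c hc).trans ?_
  unfold hypC
  have : 0 ≤ ∑ T, c T ^ 2 := sum_nonneg fun _ _ => sq_nonneg _
  gcongr
  exact mul_le_of_le_one_right (by positivity) h1

/-- The remainder in the integration by parts formula, for a single sign. -/
lemma stein_term (n : ℕ) {c : Finset (Fin ℓ) → ℝ} (hc : ∀ T, c T ≠ 0 → #T = 4)
    (h1 : ∑ T, c T ^ 2 = 1) (δ : ℝ) (hδ : ∀ i, infl c i ≤ δ) (i : Fin ℓ) :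
    |ex (fun ε => walsh (part i c) ε * walsh c ε ^ (n + 1)) -
        (n + 1) * ex (fun ε => walsh (part i c) ε ^ 2 * walsh c ε ^ n)| ≤
      2 * (n + 1) ^ 2 * 13 ^ 6 * √(9 ^ n * (1 + hypC n + 4 ^ n * hypC n)) * √δ * infl c i := by
  set X := walsh c with hX
  set g := walsh (part i c) with hg
  -- Flipping the `i`-th sign turns `g` into `-g` and `X` into `X - 2 g`.
  have hflip : ex (fun ε => g ε * X ε ^ (n + 1)) =
      ex (fun ε => -(g ε * (X ε + -(2 * g ε)) ^ (n + 1))) := by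
    rw [← ex_flip i]
    congr 1
    ext ε
    rw [hX, hg, walsh_part_flip, walsh_flip]
    ring
  have hrepr : ex (fun ε => g ε * X ε ^ (n + 1)) - (n + 1) * ex (fun ε => g ε ^ 2 * X ε ^ n) =
      ex (fun ε => -(1 / 2) * (g ε * ((X ε + -(2 * g ε)) ^ (n + 1) - X ε ^ (n + 1) -
        (n + 1) * (-(2 * g ε)) * X ε ^ n))) := by
    have e : ∀ ε, -(1 / 2) * (g ε * ((X ε + -(2 * g ε)) ^ (n + 1) - X ε ^ (n + 1) -
        (n + 1) * (-(2 * g ε)) * X ε ^ n)) = (1 / 2) * (-(g ε * (X ε + -(2 * g ε)) ^ (n + 1)) +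
          g ε * X ε ^ (n + 1)) - (n + 1) * (g ε ^ 2 * X ε ^ n) := by
      intro ε; ring
    simp only [e]
    rw [ex_sub, ex_mul, ex_add, ← hflip, ex_mul]
    ring
  rw [hrepr]
  -- The Taylor remainder is cubic in `g`; its sixth moment is at most of order `infl c i ^ 3`.
  have hv0 := infl_nonneg c i
  have hpart : ∀ T, part i c T ≠ 0 → #T ≤ 4 := fun T hT => (hc T (part_ne_zero hT).2).le
  have hg6 : √(ex fun ε => (|g ε| ^ 3) ^ 2) ≤ 13 ^ 6 * (√δ * infl c i) := by
    have h6 : ex (fun ε => (|g ε| ^ 3) ^ 2) ≤ (13 ^ 6 * infl c i) ^ 2 * δ := by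
      have e : ∀ ε, (|g ε| ^ 3) ^ 2 = g ε ^ (2 * 3) := by
        intro ε; rw [pow_right_comm, sq_abs, ← pow_mul]
      simp only [e]
      refine (hyper 3 (part i c) hpart).trans ?_
      change ((4 * ((3 : ℕ) : ℝ) + 1) ^ 4 * infl c i) ^ 3 ≤ _
      calc ((4 * ((3 : ℕ) : ℝ) + 1) ^ 4 * infl c i) ^ 3
          = (13 ^ 6 * infl c i) ^ 2 * infl c i := by push_cast; ring
        _ ≤ _ := by
          gcongr
          exact hδ i
    calc √(ex fun ε => (|g ε| ^ 3) ^ 2) ≤ √((13 ^ 6 * infl c i) ^ 2 * δ) := Real.sqrt_le_sqrt h6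
      _ = 13 ^ 6 * (√δ * infl c i) := by
        rw [Real.sqrt_mul (sq_nonneg _), Real.sqrt_sq (by positivity)]; ring
  have hW : ex (fun ε => ((1 + |X ε| + |2 * g ε|) ^ n) ^ 2) ≤
      9 ^ n * (1 + hypC n + 4 ^ n * hypC n) := by
    refine (ex_one_add_pow_le X (fun ε => 2 * g ε) n).trans ?_
    have a1 : ex (fun ε => X ε ^ (2 * n)) ≤ hypC n :=
      hyper_one n (fun T hT => (hc T hT).le) h1.le
    have a2 : ex (fun ε => (2 * g ε) ^ (2 * n)) ≤ 4 ^ n * hypC n := by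
      have e : ∀ ε, (2 * g ε) ^ (2 * n) = 4 ^ n * g ε ^ (2 * n) := by
        intro ε; rw [mul_pow, pow_mul]; norm_num
      simp only [e, ex_mul]
      gcongr
      exact hyper_one n hpart ((infl_le c i).trans h1.le)
    gcongr
  calc _ ≤ ex (fun ε => 2 * (n + 1) ^ 2 * (|g ε| ^ 3 * (1 + |X ε| + |2 * g ε|) ^ n)) := by
        refine abs_ex_le.trans (ex_mono fun ε => ?_)
        have t := taylor_pow (X ε) (-(2 * g ε)) n
        rw [abs_neg] at t
        rw [abs_mul, abs_mul]
        have : |(-(1 / 2) : ℝ)| = 1 / 2 := by norm_num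
        rw [this]
        calc _ ≤ 1 / 2 * (|g ε| * ((n + 1) ^ 2 * (-(2 * g ε)) ^ 2 *
              (1 + |X ε| + |2 * g ε|) ^ n)) := by gcongr
          _ = _ := by
            have : (-(2 * g ε)) ^ 2 = 4 * |g ε| ^ 2 := by rw [sq_abs]; ring
            rw [this]; ring
    _ = 2 * (n + 1) ^ 2 * ex (fun ε => |g ε| ^ 3 * (1 + |X ε| + |2 * g ε|) ^ n) := ex_mul _
    _ ≤ 2 * (n + 1) ^ 2 * ((13 ^ 6 * (√δ * infl c i)) *
          √(9 ^ n * (1 + hypC n + 4 ^ n * hypC n))) := by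
        gcongr
        refine ex_mul_le.trans ?_
        gcongr
    _ = _ := by ring

/-- Stein's recursion `E X^{n+2} ≈ (n+1) E X^n` for a normalised homogeneous polynomial `X` of
degree `4`: the error is small as soon as all influences are small and the carré du champ is
concentrated around its mean `4`. -/
lemma stein (n : ℕ) : ∃ C : ℝ, ∀ (ℓ : ℕ) (c : Finset (Fin ℓ) → ℝ) (δ η : ℝ),
    (∀ T, c T ≠ 0 → #T = 4) → ∑ T, c T ^ 2 = 1 → (∀ i, infl c i ≤ δ) →
    ex (fun ε => (gam c ε - 4) ^ 2) ≤ η →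
    |ex (fun ε => walsh c ε ^ (n + 2)) - (n + 1) * ex (fun ε => walsh c ε ^ n)| ≤
      C * (√δ + √η) := by
  set D := 2 * ((n : ℝ) + 1) ^ 2 * 13 ^ 6 * √(9 ^ n * (1 + hypC n + 4 ^ n * hypC n)) with hD
  have hD0 : 0 ≤ D := by positivity
  refine ⟨D + (n + 1) * √(hypC n), fun ℓ c δ η hc h1 hδ hη => ?_⟩
  set X := walsh c with hX
  have hA : |4 * ex (fun ε => X ε ^ (n + 2)) - (n + 1) * ex (fun ε => gam c ε * X ε ^ n)| ≤
      4 * (D * √δ) := by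
    have e1 : 4 * ex (fun ε => X ε ^ (n + 2)) =
        ∑ i, ex (fun ε => walsh (part i c) ε * X ε ^ (n + 1)) := by
      rw [← ex_mul, ← ex_sum]
      congr 1
      ext ε
      rw [← sum_mul, sum_walsh_part hc]
      ring
    have e2 : ex (fun ε => gam c ε * X ε ^ n) =
        ∑ i, ex (fun ε => walsh (part i c) ε ^ 2 * X ε ^ n) := by
      rw [← ex_sum]
      congr 1
      ext ε
      rw [gam, sum_mul]
    rw [e1, e2, mul_sum, ← sum_sub_distrib]
    calc _ ≤ ∑ i, D * √δ * infl c i :=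
          (abs_sum_le_sum_abs _ _).trans (sum_le_sum fun i _ => stein_term n hc h1 δ hδ i)
      _ = _ := by rw [← mul_sum, sum_infl hc, h1]; ring
  have hB : |ex (fun ε => (gam c ε - 4) * X ε ^ n)| ≤ √η * √(hypC n) := by
    refine abs_ex_le.trans ?_
    simp only [abs_mul]
    refine ex_mul_le.trans ?_
    have : ex (fun ε => |X ε ^ n| ^ 2) ≤ hypC n := by
      have e : ∀ ε, |X ε ^ n| ^ 2 = X ε ^ (2 * n) := by
        intro ε; rw [sq_abs, ← pow_mul, mul_comm]
      simp only [e]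
      exact hyper_one n (fun T hT => (hc T hT).le) h1.le
    simp only [sq_abs] at this ⊢
    gcongr
  have hsplit : ex (fun ε => (gam c ε - 4) * X ε ^ n) =
      ex (fun ε => gam c ε * X ε ^ n) - 4 * ex (fun ε => X ε ^ n) := by
    rw [← ex_mul, ← ex_sub]
    congr 1
    ext ε
    ring
  have e3 : 4 * (ex (fun ε => X ε ^ (n + 2)) - (n + 1) * ex (fun ε => X ε ^ n)) =
      (4 * ex (fun ε => X ε ^ (n + 2)) - (n + 1) * ex (fun ε => gam c ε * X ε ^ n)) +
      (n + 1) * ex (fun ε => (gam c ε - 4) * X ε ^ n) := by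
    rw [hsplit]; ring
  have h4 : 4 * |ex (fun ε => X ε ^ (n + 2)) - (n + 1) * ex (fun ε => X ε ^ n)| ≤
      4 * (D * √δ) + (n + 1) * (√η * √(hypC n)) := by
    calc _ = |4 * (ex (fun ε => X ε ^ (n + 2)) - (n + 1) * ex (fun ε => X ε ^ n))| := by
          rw [abs_mul]; norm_num
      _ ≤ _ := by
          rw [e3]
          refine (abs_add_le _ _).trans ?_
          rw [abs_mul ((n : ℝ) + 1), abs_of_nonneg (by positivity : (0 : ℝ) ≤ n + 1)]
          gcongr
  have p1 : 0 ≤ D * √η := by positivity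
  have p2 : 0 ≤ (n + 1) * √(hypC n) * √δ := by positivity
  have p3 : 0 ≤ (n + 1) * √(hypC n) * √η := by positivity
  nlinarith

end Stein

/-! ### Concentration of the carré du champ by codegree counting -/

section Counting

variable {ℓ : ℕ} {K : ℕ} {𝒯 : Finset (Finset (Fin ℓ))}

/-- If every triple lies in at most `K` members of `𝒯`, a set of `3 - j` points lies in at most
`ℓ ^ j * K` of them: add the missing points one at a time. -/
lemma codeg_le (hK : ∀ S : Finset (Fin ℓ), #S = 3 → #{T ∈ 𝒯 | S ⊆ T} ≤ K)
    (h4 : ∀ T ∈ 𝒯, #T = 4) (j : ℕ) :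
    ∀ S : Finset (Fin ℓ), #S + j = 3 → #{T ∈ 𝒯 | S ⊆ T} ≤ ℓ ^ j * K := by
  induction j with
  | zero => intro S hS; simpa using hK S hS
  | succ j ih =>
    intro S hS
    have hsub : {T ∈ 𝒯 | S ⊆ T} ⊆ Sᶜ.biUnion fun x => {T ∈ 𝒯 | insert x S ⊆ T} := by
      intro T hT
      rw [mem_filter] at hT
      obtain ⟨x, hxT, hxS⟩ := exists_mem_notMem_of_card_lt_card
        (show #S < #T by rw [h4 T hT.1]; omega)
      simp only [mem_biUnion, mem_compl, mem_filter]
      exact ⟨x, hxS, hT.1, insert_subset hxT hT.2⟩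
    calc #{T ∈ 𝒯 | S ⊆ T} ≤ #Sᶜ * (ℓ ^ j * K) := by
          refine (card_le_card hsub).trans (card_biUnion_le_card_mul _ _ _ fun x hx => ih _ ?_)
          rw [card_insert_of_notMem (mem_compl.1 hx)]
          omega
      _ ≤ ℓ * (ℓ ^ j * K) := by
          gcongr
          exact (card_le_univ _).trans (by simp)
      _ = _ := by ring

lemma card_le_of_codeg (hK : ∀ S : Finset (Fin ℓ), #S = 3 → #{T ∈ 𝒯 | S ⊆ T} ≤ K)
    (h4 : ∀ T ∈ 𝒯, #T = 4) : #𝒯 ≤ ℓ ^ 3 * K := by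
  have := codeg_le hK h4 3 ∅ (by simp)
  simpa using this

/-- Bound for the number of pairs of members of `𝒯` meeting in exactly `k` points. -/
lemma pairs_le (hK : ∀ S : Finset (Fin ℓ), #S = 3 → #{T ∈ 𝒯 | S ⊆ T} ≤ K)
    (h4 : ∀ T ∈ 𝒯, #T = 4) {k j : ℕ} (hkj : k + j = 3) :
    #{a ∈ 𝒯 ×ˢ 𝒯 | #(a.1 ∩ a.2) = k} ≤ ℓ ^ 3 * K * (16 * (ℓ ^ j * K)) := by
  have hsub : {a ∈ 𝒯 ×ˢ 𝒯 | #(a.1 ∩ a.2) = k} ⊆ 𝒯.biUnion fun T₁ =>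
      (powersetCard k T₁).biUnion fun S => ({T ∈ 𝒯 | S ⊆ T}).image fun T => (T₁, T) := by
    rintro ⟨T₁, T₂⟩ ha
    simp only [mem_filter, mem_product] at ha
    simp only [mem_biUnion, mem_image, mem_filter, mem_powersetCard]
    exact ⟨T₁, ha.1.1, T₁ ∩ T₂, ⟨inter_subset_left, ha.2⟩, T₂, ⟨ha.1.2, inter_subset_right⟩, rfl⟩
  calc _ ≤ #𝒯 * (16 * (ℓ ^ j * K)) := by
        refine (card_le_card hsub).trans (card_biUnion_le_card_mul _ _ _ fun T₁ hT₁ => ?_)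
        calc _ ≤ #(powersetCard k T₁) * (ℓ ^ j * K) := by
              refine card_biUnion_le_card_mul _ _ _ fun S hS => ?_
              refine card_image_le.trans (codeg_le hK h4 j S ?_)
              rw [(mem_powersetCard.1 hS).2, hkj]
          _ ≤ 16 * (ℓ ^ j * K) := by
              gcongr
              rw [card_powersetCard, h4 T₁ hT₁]
              exact Nat.choose_le_two_pow 4 k
    _ ≤ _ := by
        gcongr
        exact card_le_of_codeg hK h4

/-- A pair with symmetric difference `U` is determined by its first member, and when both members
have four points this one contains half of `U`, that is `3 - j` prescribed points. -/
lemma sols_le (hK : ∀ S : Finset (Fin ℓ), #S = 3 → #{T ∈ 𝒯 | S ⊆ T} ≤ K)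
    (h4 : ∀ T ∈ 𝒯, #T = 4) {j : ℕ} {U : Finset (Fin ℓ)} (hU : #U + 2 * (j + 1) = 8) :
    #{b ∈ 𝒯 ×ˢ 𝒯 | symmDiff b.1 b.2 = U} ≤ 256 * (ℓ ^ j * K) := by
  have hinj : Set.InjOn Prod.fst
      (({b ∈ 𝒯 ×ˢ 𝒯 | symmDiff b.1 b.2 = U} : Finset _) : Set (Finset (Fin ℓ) × Finset (Fin ℓ))) := by
    rintro ⟨a, b⟩ h ⟨a', b'⟩ h' (rfl : a = a')
    simp only [coe_filter, Set.mem_ofPred_eq] at h h'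
    have : b = b' := symmDiff_right_injective a (h.2.trans h'.2.symm)
    rw [this]
  rw [← card_image_of_injOn hinj]
  have hsub : ({b ∈ 𝒯 ×ˢ 𝒯 | symmDiff b.1 b.2 = U}).image Prod.fst ⊆
      (powersetCard (3 - j) U).biUnion fun S => {T ∈ 𝒯 | S ⊆ T} := by
    intro T hT
    obtain ⟨⟨T, T'⟩, hb, rfl⟩ := mem_image.1 hT
    simp only [mem_filter, mem_product] at hb
    obtain ⟨⟨h1, h2⟩, rfl⟩ := hb
    simp only [mem_biUnion, mem_filter, mem_powersetCard]
    refine ⟨T \ T', ⟨?_, ?_⟩, h1, sdiff_subset⟩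
    · rw [symmDiff_def]; exact subset_union_left
    · have e1 := card_sdiff_add_card_inter T T'
      have e2 := card_sdiff_add_card_inter T' T
      rw [symmDiff_def, sup_eq_union, card_union_of_disjoint disjoint_sdiff_sdiff] at hU
      rw [inter_comm] at e2
      have := h4 _ h1
      have := h4 _ h2
      omega
  calc _ ≤ #(powersetCard (3 - j) U) * (ℓ ^ j * K) := by
        refine (card_le_card hsub).trans (card_biUnion_le_card_mul _ _ _ fun S hS => ?_)
        refine codeg_le hK h4 j S ?_
        rw [(mem_powersetCard.1 hS).2]
        omega
    _ ≤ _ := by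
        gcongr
        rw [card_powersetCard]
        refine (Nat.choose_le_two_pow _ _).trans ?_
        calc 2 ^ #U ≤ 2 ^ 8 := Nat.pow_le_pow_right (by norm_num) (by omega)
          _ = 256 := by norm_num

/-- Pairs of distinct intersecting members of `𝒯`. -/
def linked (𝒯 : Finset (Finset (Fin ℓ))) : Finset (Finset (Fin ℓ) × Finset (Fin ℓ)) :=
  {a ∈ 𝒯 ×ˢ 𝒯 | a.1 ≠ a.2 ∧ (a.1 ∩ a.2).Nonempty}

/-- There are `O(ℓ⁵)` quadruples of members of `𝒯` with vanishing total symmetric difference whose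
first two, and last two, members are distinct and intersect. -/
lemma linked_le (hK : ∀ S : Finset (Fin ℓ), #S = 3 → #{T ∈ 𝒯 | S ⊆ T} ≤ K)
    (h4 : ∀ T ∈ 𝒯, #T = 4) :
    ∑ a ∈ linked 𝒯, #{b ∈ linked 𝒯 | symmDiff a.1 a.2 = symmDiff b.1 b.2} ≤
      12288 * K ^ 3 * ℓ ^ 5 := by
  have hsub : linked 𝒯 ⊆ (range 3).biUnion fun j => {a ∈ 𝒯 ×ˢ 𝒯 | #(a.1 ∩ a.2) = j + 1} := by
    rintro ⟨T, T'⟩ ha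
    simp only [linked, mem_filter, mem_product] at ha
    obtain ⟨⟨h1, h2⟩, hne, hn⟩ := ha
    simp only [mem_biUnion, mem_range, mem_filter, mem_product]
    have hpos := hn.card_pos
    have hle : #(T ∩ T') < 4 := by
      by_contra h
      have e1 : T ∩ T' = T := eq_of_subset_of_card_le inter_subset_left (by rw [h4 T h1]; omega)
      have e2 : T ∩ T' = T' := eq_of_subset_of_card_le inter_subset_right (by rw [h4 T' h2]; omega)
      exact hne (e1.symm.trans e2)
    exact ⟨#(T ∩ T') - 1, by omega, ⟨h1, h2⟩, by omega⟩
  calc _ ≤ ∑ a ∈ (range 3).biUnion fun j => {a ∈ 𝒯 ×ˢ 𝒯 | #(a.1 ∩ a.2) = j + 1},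
          #{b ∈ linked 𝒯 | symmDiff a.1 a.2 = symmDiff b.1 b.2} :=
        sum_le_sum_of_subset hsub
    _ ≤ ∑ j ∈ range 3, ∑ a ∈ 𝒯 ×ˢ 𝒯 with #(a.1 ∩ a.2) = j + 1,
          #{b ∈ linked 𝒯 | symmDiff a.1 a.2 = symmDiff b.1 b.2} := by
        refine (sum_biUnion fun j _ j' _ hne => ?_).le
        exact disjoint_filter.2 fun a _ h h' => hne (by omega)
    _ ≤ ∑ j ∈ range 3, 4096 * K ^ 3 * ℓ ^ 5 := by
        refine sum_le_sum fun j hj => ?_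
        have hj3 := mem_range.1 hj
        calc _ ≤ ∑ a ∈ 𝒯 ×ˢ 𝒯 with #(a.1 ∩ a.2) = j + 1, 256 * (ℓ ^ j * K) := by
              refine sum_le_sum fun a ha => ?_
              simp only [mem_filter, mem_product] at ha
              have hU : #(symmDiff a.1 a.2) + 2 * (j + 1) = 8 := by
                have e1 := card_sdiff_add_card_inter a.1 a.2
                have e2 := card_sdiff_add_card_inter a.2 a.1
                rw [inter_comm] at e2
                rw [symmDiff_def, sup_eq_union, card_union_of_disjoint disjoint_sdiff_sdiff]
                have := h4 _ ha.1.1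
                have := h4 _ ha.1.2
                omega
              refine (card_le_card ?_).trans (sols_le hK h4 hU)
              intro b hb
              simp only [linked, mem_filter] at hb ⊢
              exact ⟨hb.1.1, hb.2.symm⟩
          _ ≤ ℓ ^ 3 * K * (16 * (ℓ ^ (2 - j) * K)) * (256 * (ℓ ^ j * K)) := by
              rw [sum_const, smul_eq_mul]
              gcongr
              exact pairs_le hK h4 (by omega)
          _ = 4096 * K ^ 3 * (ℓ ^ 3 * (ℓ ^ (2 - j) * ℓ ^ j)) := by ring
          _ = _ := by
              rw [← pow_add, ← pow_add, show 3 + (2 - j + j) = 5 by omega]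
    _ = _ := by simp; ring

lemma sum_part_mul (c : Finset (Fin ℓ) → ℝ) (S T : Finset (Fin ℓ)) :
    ∑ i, part i c S * part i c T = #(S ∩ T) * (c S * c T) := by
  have : ∀ i, part i c S * part i c T = if i ∈ S ∩ T then c S * c T else 0 := by
    intro i
    unfold part
    by_cases h1 : i ∈ S <;> by_cases h2 : i ∈ T <;> simp [h1, h2]
  simp only [this, sum_ite_mem, univ_inter, sum_const, nsmul_eq_mul]

/-- The centred carré du champ: the diagonal pairs contribute its mean, disjoint pairs nothing. -/
lemma gam_sub {c : Finset (Fin ℓ) → ℝ} (hc : ∀ T, c T ≠ 0 → T ∈ 𝒯) (h4 : ∀ T ∈ 𝒯, #T = 4)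
    (ε : Fin ℓ → Bool) :
    gam c ε - 4 * ∑ T, c T ^ 2 =
      ∑ a ∈ linked 𝒯, (#(a.1 ∩ a.2) * (c a.1 * c a.2)) * chi (symmDiff a.1 a.2) ε := by
  have e1 : gam c ε = ∑ a : Finset (Fin ℓ) × Finset (Fin ℓ),
      (#(a.1 ∩ a.2) * (c a.1 * c a.2)) * chi (symmDiff a.1 a.2) ε := by
    rw [Fintype.sum_prod_type]
    unfold gam walsh
    simp only [sq, sum_mul_sum]
    rw [sum_comm]
    refine sum_congr rfl fun S _ => ?_
    rw [sum_comm]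
    refine sum_congr rfl fun T _ => ?_
    rw [← sum_part_mul, sum_mul]
    refine sum_congr rfl fun i _ => ?_
    rw [← chi_mul]
    ring
  have e2 : 4 * ∑ T, c T ^ 2 = ∑ a : Finset (Fin ℓ) × Finset (Fin ℓ),
      if a.1 = a.2 then 4 * c a.1 ^ 2 else 0 := by
    rw [Fintype.sum_prod_type, mul_sum]
    simp
  rw [e1, e2, ← sum_sub_distrib]
  symm
  rw [← sum_subset (subset_univ (linked 𝒯))]
  · refine sum_congr rfl fun a ha => ?_
    simp only [linked, mem_filter] at ha
    rw [if_neg ha.2.1, sub_zero]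
  · rintro ⟨S, T⟩ - ha
    simp only [linked, mem_filter, mem_product, not_and, not_nonempty_iff_eq_empty] at ha
    by_cases hST : S = T
    · subst hST
      by_cases h0 : c S = 0
      · simp [h0]
      · simp [chi_empty, h4 S (hc S h0), sq]
    · simp only [hST, if_false, sub_zero]
      by_cases h0 : c S = 0
      · simp [h0]
      by_cases h1 : c T = 0
      · simp [h1]
      simp [ha ⟨hc S h0, hc T h1⟩ hST]

/-- Concentration of the carré du champ. -/
lemma gam_conc (hK : ∀ S : Finset (Fin ℓ), #S = 3 → #{T ∈ 𝒯 | S ⊆ T} ≤ K)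
    (h4 : ∀ T ∈ 𝒯, #T = 4) {c : Finset (Fin ℓ) → ℝ} (hc : ∀ T, c T ≠ 0 → T ∈ 𝒯) {κ : ℝ}
    (hκ : ∀ T, |c T| ≤ κ) :
    ex (fun ε => (gam c ε - 4 * ∑ T, c T ^ 2) ^ 2) ≤
      16 * κ ^ 4 * (12288 * K ^ 3 * ℓ ^ 5) := by
  simp only [gam_sub hc h4]
  rw [ex_sq_sum (linked 𝒯) (fun a => #(a.1 ∩ a.2) * (c a.1 * c a.2))]
  have hx : ∀ a ∈ linked 𝒯, |#(a.1 ∩ a.2) * (c a.1 * c a.2)| ≤ 4 * κ ^ 2 := by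
    intro a ha
    simp only [linked, mem_filter, mem_product] at ha
    have h1 : (#(a.1 ∩ a.2) : ℝ) ≤ 4 := by
      have := card_le_card (inter_subset_left (s₁ := a.1) (s₂ := a.2))
      rw [h4 _ ha.1.1] at this
      exact_mod_cast this
    have h0 := (abs_nonneg _).trans (hκ a.1)
    rw [abs_mul, abs_mul, Nat.abs_cast, sq]
    gcongr <;> exact hκ _
  calc _ ≤ ∑ a ∈ linked 𝒯, ∑ b ∈ linked 𝒯,
          if symmDiff a.1 a.2 = symmDiff b.1 b.2 then 16 * κ ^ 4 else 0 := by
        refine sum_le_sum fun a ha => sum_le_sum fun b hb => ?_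
        split_ifs
        · refine (le_abs_self _).trans ?_
          rw [abs_mul]
          calc _ ≤ (4 * κ ^ 2) * (4 * κ ^ 2) :=
                mul_le_mul (hx a ha) (hx b hb) (abs_nonneg _) (by positivity)
            _ = _ := by ring
        · exact le_rfl
    _ = 16 * κ ^ 4 * ((∑ a ∈ linked 𝒯,
          #{b ∈ linked 𝒯 | symmDiff a.1 a.2 = symmDiff b.1 b.2} : ℕ) : ℝ) := by
        push_cast
        rw [mul_sum]
        refine sum_congr rfl fun a _ => ?_
        rw [← sum_filter, sum_const, nsmul_eq_mul, mul_comm]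
    _ ≤ _ := by
        gcongr
        exact_mod_cast linked_le hK h4

lemma infl_le_of_codeg (hK : ∀ S : Finset (Fin ℓ), #S = 3 → #{T ∈ 𝒯 | S ⊆ T} ≤ K)
    (h4 : ∀ T ∈ 𝒯, #T = 4) {c : Finset (Fin ℓ) → ℝ} (hc : ∀ T, c T ≠ 0 → T ∈ 𝒯) {κ : ℝ}
    (hκ : ∀ T, |c T| ≤ κ) (i : Fin ℓ) : infl c i ≤ κ ^ 2 * (ℓ ^ 2 * K) := by
  have h := codeg_le hK h4 2 {i} (by simp)
  calc infl c i = ∑ T ∈ 𝒯 with {i} ⊆ T, part i c T ^ 2 := by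
        unfold infl
        symm
        refine sum_subset (subset_univ _) fun T _ hT => ?_
        by_contra h0
        obtain ⟨h1, h2⟩ := part_ne_zero (fun h => h0 (by rw [h]; norm_num))
        exact hT (by simp [hc T h2, h1])
    _ ≤ ∑ T ∈ 𝒯 with {i} ⊆ T, κ ^ 2 := by
        refine sum_le_sum fun T _ => ?_
        have h0 := (abs_nonneg _).trans (hκ T)
        unfold part
        split_ifs
        · rw [← sq_abs]
          exact pow_le_pow_left₀ (abs_nonneg _) (hκ T) 2
        · rw [zero_pow two_ne_zero]; positivity
    _ = κ ^ 2 * (#{T ∈ 𝒯 | {i} ⊆ T} : ℝ) := by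
        rw [sum_const, nsmul_eq_mul, mul_comm]
    _ ≤ _ := by
        gcongr
        exact_mod_cast h

end Counting

/-! ### Convergence of the standardized moments -/

section Limit

/-- The moments of the standard normal distribution, through the recursion that Stein's identity
gives for them. -/
def mom : ℕ → ℝ
  | 0 => 1
  | 1 => 0
  | n + 2 => (n + 1) * mom n

lemma mom_odd (k : ℕ) : mom (2 * k + 1) = 0 := by
  induction k with
  | zero => rfl
  | succ k ih =>
    rw [show 2 * (k + 1) + 1 = (2 * k + 1) + 2 by ring, mom, ih, mul_zero]

lemma mom_even (k : ℕ) : mom (2 * k) = Nat.doubleFactorial (2 * k - 1) := by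
  induction k with
  | zero => simp [mom]
  | succ k ih =>
    rw [show 2 * (k + 1) = 2 * k + 2 by ring, mom, ih]
    rcases k with _ | k
    · simp
    · rw [show 2 * (k + 1) + 2 - 1 = (2 * k + 1) + 2 by omega, Nat.doubleFactorial_add_two,
        show 2 * (k + 1) - 1 = 2 * k + 1 by omega]
      push_cast
      ring

lemma tendsto_sqrt_div (M : ℝ) : Tendsto (fun ℓ : ℕ => √(M / ℓ)) atTop (nhds 0) := by
  have := (Real.continuous_sqrt.tendsto 0).comp (tendsto_const_div_atTop_nhds_zero_nat M)
  rw [Real.sqrt_zero] at this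
  exact this

variable {c d : ∀ ℓ : ℕ, Finset (Fin ℓ) → ℝ} {M : ℝ}

lemma tendsto_main (hc : ∀ ℓ T, c ℓ T ≠ 0 → #T = 4)
    (h1 : ∀ᶠ ℓ in atTop, ∑ T, c ℓ T ^ 2 = 1)
    (hδ : ∀ᶠ ℓ : ℕ in atTop, ∀ i, infl (c ℓ) i ≤ M / ℓ)
    (hη : ∀ᶠ ℓ : ℕ in atTop, ex (fun ε => (gam (c ℓ) ε - 4) ^ 2) ≤ M / ℓ) (p : ℕ) :
    Tendsto (fun ℓ => ex (fun ε => walsh (c ℓ) ε ^ p)) atTop (nhds (mom p)) := by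
  induction p using Nat.twoStepInduction with
  | zero => simp [mom, ex_const]
  | one =>
    have : ∀ ℓ, ex (fun ε => walsh (c ℓ) ε ^ 1) = 0 := by
      intro ℓ
      simp only [pow_one]
      rw [show (fun ε => walsh (c ℓ) ε) = walsh (c ℓ) from rfl, ex_walsh]
      by_contra h
      simpa using hc ℓ _ h
    simp only [this, mom]
    exact tendsto_const_nhds
  | more n ih _ =>
    obtain ⟨C, hC⟩ := stein n
    have e : (fun ℓ => ex (fun ε => walsh (c ℓ) ε ^ (n + 2))) = fun ℓ =>
        (n + 1) * ex (fun ε => walsh (c ℓ) ε ^ n) + (ex (fun ε => walsh (c ℓ) ε ^ (n + 2)) -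
          (n + 1) * ex (fun ε => walsh (c ℓ) ε ^ n)) := by
      ext ℓ; ring
    rw [e, mom, ← add_zero ((n + 1) * mom n)]
    refine (ih.const_mul _).add ?_
    have hlim : Tendsto (fun ℓ : ℕ => C * (√(M / ℓ) + √(M / ℓ))) atTop (nhds 0) := by
      simpa using ((tendsto_sqrt_div M).add (tendsto_sqrt_div M)).const_mul C
    refine squeeze_zero_norm' ?_ hlim
    filter_upwards [h1, hδ, hη] with ℓ h1 hδ hη
    exact hC ℓ (c ℓ) _ _ (hc ℓ) h1 hδ hη

/-- A perturbation of vanishing variance does not affect the limiting moments. -/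
lemma tendsto_perturbed (hc : ∀ ℓ T, c ℓ T ≠ 0 → #T = 4)
    (h1 : ∀ᶠ ℓ in atTop, ∑ T, c ℓ T ^ 2 = 1)
    (hδ : ∀ᶠ ℓ : ℕ in atTop, ∀ i, infl (c ℓ) i ≤ M / ℓ)
    (hη : ∀ᶠ ℓ : ℕ in atTop, ex (fun ε => (gam (c ℓ) ε - 4) ^ 2) ≤ M / ℓ)
    (hd : ∀ ℓ T, d ℓ T ≠ 0 → #T ≤ 4)
    (hρ : ∀ᶠ ℓ : ℕ in atTop, ∑ T, d ℓ T ^ 2 ≤ M / ℓ) (p : ℕ) :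
    Tendsto (fun ℓ => ex (fun ε => (walsh (c ℓ) ε + walsh (d ℓ) ε) ^ p)) atTop
      (nhds (mom p)) := by
  have e : (fun ℓ => ex (fun ε => (walsh (c ℓ) ε + walsh (d ℓ) ε) ^ p)) = fun ℓ =>
      ex (fun ε => walsh (c ℓ) ε ^ p) +
        ex (fun ε => (walsh (c ℓ) ε + walsh (d ℓ) ε) ^ p - walsh (c ℓ) ε ^ p) := by
    ext ℓ; rw [ex_sub]; ring
  rw [e, ← add_zero (mom p)]
  refine (tendsto_main hc h1 hδ hη p).add ?_
  have hlim : Tendsto (fun ℓ : ℕ => p * (√(M / ℓ) * √(9 ^ p * (1 + hypC p + hypC p)))) atTop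
      (nhds 0) := by
    simpa using ((tendsto_sqrt_div M).mul_const (√(9 ^ p * (1 + hypC p + hypC p)))).const_mul
      (p : ℝ)
  have hM : ∀ᶠ ℓ : ℕ in atTop, M / ℓ ≤ 1 :=
    (tendsto_const_div_atTop_nhds_zero_nat M).eventually_le_const one_pos
  refine squeeze_zero_norm' ?_ hlim
  filter_upwards [h1, hρ, hM] with ℓ h1 hρ hM
  calc ‖ex (fun ε => (walsh (c ℓ) ε + walsh (d ℓ) ε) ^ p - walsh (c ℓ) ε ^ p)‖
      ≤ ex (fun ε => p * (|walsh (d ℓ) ε| * (1 + |walsh (c ℓ) ε| + |walsh (d ℓ) ε|) ^ p)) := by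
        refine abs_ex_le.trans (ex_mono fun ε => (taylor_pow_one _ _ _).trans (le_of_eq ?_))
        ring
    _ ≤ _ := by
        rw [ex_mul]
        gcongr
        refine ex_mul_le.trans ?_
        gcongr
        · simp only [sq_abs]
          rw [ex_walsh_sq]
          exact hρ
        · refine (ex_one_add_pow_le _ _ p).trans ?_
          gcongr
          · exact hyper_one p (fun T hT => (hc ℓ T hT).le) h1.le
          · exact hyper_one p (hd ℓ) (hρ.trans hM)

/-- Convergence of standardized moments for `walsh (t ℓ) + walsh (r ℓ)`: the leading part `t ℓ` is
homogeneous of degree `4` with bounded coefficients, every triple lies in boundedly many of its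
supporting sets and its variance is at least of order `ℓ³`, whereas the variance of `r ℓ` is at
most of order `ℓ²`. -/
lemma tendsto_standardized {t r : ∀ ℓ : ℕ, Finset (Fin ℓ) → ℝ} {K : ℕ} {κ c₀ D : ℝ} (hc₀ : 0 < c₀)
    (ht : ∀ ℓ T, t ℓ T ≠ 0 → #T = 4) (hr : ∀ ℓ T, r ℓ T ≠ 0 → #T ≤ 4)
    (hκ : ∀ ℓ T, |t ℓ T| ≤ κ)
    (hK : ∀ ℓ (S : Finset (Fin ℓ)), #S = 3 → #{T | t ℓ T ≠ 0 ∧ S ⊆ T} ≤ K)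
    (hD : ∀ ℓ : ℕ, ∑ T, r ℓ T ^ 2 ≤ D * ℓ ^ 2)
    (hσ : ∀ᶠ ℓ : ℕ in atTop, c₀ * (ℓ : ℝ) ^ 3 ≤ ∑ T, t ℓ T ^ 2) (p : ℕ) :
    Tendsto (fun ℓ => ex (fun ε => (walsh (t ℓ) ε + walsh (r ℓ) ε) ^ p) /
      ex (fun ε => (walsh (t ℓ) ε + walsh (r ℓ) ε) ^ 2) ^ ((p : ℝ) / 2)) atTop
      (nhds (mom p)) := by
  set s : ℕ → ℝ := fun ℓ => ∑ T, t ℓ T ^ 2 with hs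
  have hs0 : ∀ ℓ, 0 ≤ s ℓ := fun ℓ => sum_nonneg fun _ _ => sq_nonneg _
  set c : ∀ ℓ : ℕ, Finset (Fin ℓ) → ℝ := fun ℓ T => t ℓ T / √(s ℓ) with hcdef
  set d : ∀ ℓ : ℕ, Finset (Fin ℓ) → ℝ := fun ℓ T => r ℓ T / √(s ℓ) with hddef
  have hD0 : 0 ≤ D := by
    have := (sum_nonneg fun T _ => sq_nonneg (r 1 T)).trans (hD 1)
    simpa using this
  set M := κ ^ 2 * K / c₀ + 16 * κ ^ 4 * (12288 * K ^ 3) / c₀ ^ 2 + D / c₀ with hM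
  have hcne : ∀ ℓ T, c ℓ T ≠ 0 → t ℓ T ≠ 0 := fun ℓ T h h0 => h (by simp [hcdef, h0])
  have hdne : ∀ ℓ T, d ℓ T ≠ 0 → r ℓ T ≠ 0 := fun ℓ T h h0 => h (by simp [hddef, h0])
  have hbig : ∀ᶠ ℓ : ℕ in atTop, 0 < (ℓ : ℝ) ∧ c₀ * (ℓ : ℝ) ^ 3 ≤ s ℓ ∧ 0 < s ℓ := by
    filter_upwards [hσ, eventually_gt_atTop 0] with ℓ h1 h2
    have h2' : (0 : ℝ) < ℓ := by exact_mod_cast h2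
    exact ⟨h2', h1, lt_of_lt_of_le (by positivity) h1⟩
  have q1 : 0 ≤ κ ^ 2 * K / c₀ := by positivity
  have q2 : 0 ≤ 16 * κ ^ 4 * (12288 * K ^ 3) / c₀ ^ 2 := by positivity
  have q3 : 0 ≤ D / c₀ := by positivity
  have hc4 : ∀ ℓ T, c ℓ T ≠ 0 → #T = 4 := fun ℓ T h => ht ℓ T (hcne ℓ T h)
  have hd4 : ∀ ℓ T, d ℓ T ≠ 0 → #T ≤ 4 := fun ℓ T h => hr ℓ T (hdne ℓ T h)
  have hmem : ∀ ℓ T, c ℓ T ≠ 0 → T ∈ (univ.filter fun T => t ℓ T ≠ 0) := fun ℓ T h => by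
    simpa using hcne ℓ T h
  have hmem4 : ∀ ℓ, ∀ T ∈ (univ.filter fun T => t ℓ T ≠ 0), #T = 4 := fun ℓ T h =>
    ht ℓ T (by simpa using h)
  have hK' : ∀ ℓ (S : Finset (Fin ℓ)), #S = 3 →
      #{T ∈ (univ.filter fun T => t ℓ T ≠ 0) | S ⊆ T} ≤ K := by
    intro ℓ S hS
    rw [filter_filter]
    exact hK ℓ S hS
  have hcκ : ∀ ℓ T, |c ℓ T| ≤ κ / √(s ℓ) := by
    intro ℓ T
    rw [hcdef]
    simp only
    rw [abs_div, abs_of_nonneg (Real.sqrt_nonneg _)]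
    gcongr
    exact hκ ℓ T
  have h1 : ∀ᶠ ℓ in atTop, ∑ T, c ℓ T ^ 2 = 1 := by
    filter_upwards [hbig] with ℓ h
    simp only [hcdef, div_pow, Real.sq_sqrt (hs0 ℓ), ← sum_div]
    exact div_self h.2.2.ne'
  have hδ : ∀ᶠ ℓ : ℕ in atTop, ∀ i, infl (c ℓ) i ≤ M / ℓ := by
    filter_upwards [hbig] with ℓ h i
    refine (infl_le_of_codeg (hK' ℓ) (hmem4 ℓ) (hmem ℓ) (hcκ ℓ) i).trans ?_
    rw [div_pow, Real.sq_sqrt (hs0 ℓ)]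
    calc κ ^ 2 / s ℓ * (ℓ ^ 2 * K) ≤ κ ^ 2 / (c₀ * ℓ ^ 3) * (ℓ ^ 2 * K) := by
          have := h.1
          gcongr
          exact h.2.1
      _ = κ ^ 2 * K / c₀ / ℓ := by
          have := h.1
          field_simp
      _ ≤ M / ℓ := by
          have := h.1
          gcongr
          linarith
  have hη : ∀ᶠ ℓ : ℕ in atTop, ex (fun ε => (gam (c ℓ) ε - 4) ^ 2) ≤ M / ℓ := by
    filter_upwards [hbig, h1] with ℓ h h1
    have h3 := gam_conc (hK' ℓ) (hmem4 ℓ) (hmem ℓ) (hcκ ℓ)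
    rw [h1, mul_one] at h3
    refine h3.trans ?_
    have e : (κ / √(s ℓ)) ^ 4 = κ ^ 4 / (s ℓ) ^ 2 := by
      rw [div_pow, show √(s ℓ) ^ 4 = (√(s ℓ) ^ 2) ^ 2 by ring, Real.sq_sqrt (hs0 ℓ)]
    rw [e]
    calc 16 * (κ ^ 4 / s ℓ ^ 2) * (12288 * K ^ 3 * ℓ ^ 5)
        ≤ 16 * (κ ^ 4 / (c₀ * ℓ ^ 3) ^ 2) * (12288 * K ^ 3 * ℓ ^ 5) := by
          have := h.1
          gcongr
          exact h.2.1
      _ = 16 * κ ^ 4 * (12288 * K ^ 3) / c₀ ^ 2 / ℓ := by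
          have := h.1
          field_simp
      _ ≤ M / ℓ := by
          have := h.1
          gcongr
          linarith
  have hρ : ∀ᶠ ℓ : ℕ in atTop, ∑ T, d ℓ T ^ 2 ≤ M / ℓ := by
    filter_upwards [hbig] with ℓ h
    simp only [hddef, div_pow, Real.sq_sqrt (hs0 ℓ), ← sum_div]
    calc (∑ T, r ℓ T ^ 2) / s ℓ ≤ (D * ℓ ^ 2) / (c₀ * ℓ ^ 3) := by
          have := h.1
          gcongr
          · exact hD ℓ
          · exact h.2.1
      _ = D / c₀ / ℓ := by
          have := h.1
          field_simp
      _ ≤ M / ℓ := by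
          have := h.1
          gcongr
          linarith
  have key := tendsto_perturbed hc4 h1 hδ hη hd4 hρ
  have hden : Tendsto (fun ℓ => ex (fun ε => (walsh (c ℓ) ε + walsh (d ℓ) ε) ^ 2) ^ ((p : ℝ) / 2))
      atTop (nhds 1) := by
    have h2 : Tendsto (fun ℓ => ex (fun ε => (walsh (c ℓ) ε + walsh (d ℓ) ε) ^ 2)) atTop
        (nhds 1) := by simpa [mom] using key 2
    simpa using h2.rpow_const (p := (p : ℝ) / 2) (Or.inl one_ne_zero)
  have hfin := (key p).div hden one_ne_zero
  rw [div_one] at hfin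
  refine hfin.congr' ?_
  filter_upwards [hbig] with ℓ h
  have hsq : 0 < √(s ℓ) := Real.sqrt_pos.2 h.2.2
  have e : ∀ ε, walsh (c ℓ) ε + walsh (d ℓ) ε =
      (walsh (t ℓ) ε + walsh (r ℓ) ε) / √(s ℓ) := by
    intro ε
    simp only [walsh, hcdef, hddef, add_div, sum_div, div_mul_eq_mul_div]
  simp only [Pi.div_apply, e, div_pow, ex_div]
  rw [Real.div_rpow (ex_nonneg fun _ => sq_nonneg _) (sq_nonneg _), ← Real.rpow_natCast _ 2,
    ← Real.rpow_mul hsq.le, show ((2 : ℕ) : ℝ) * ((p : ℝ) / 2) = p by push_cast; ring,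
    Real.rpow_natCast]
  exact div_div_div_cancel_right₀ (pow_pos hsq p).ne' _ _

end Limit

/-! ### The Walsh expansion of the sum of squared autocorrelations -/

section Autocorrelation

variable {ℓ : ℕ}

/-- The quadruples `((a, c), (d, b))` of positions with `a - c = d - b`, written without
subtraction. -/
def quads (ℓ : ℕ) : Finset ((Fin ℓ × Fin ℓ) × (Fin ℓ × Fin ℓ)) :=
  {t | (t.1.1 : ℕ) + t.2.2 = t.2.1 + t.1.2}

/-- The positions that occur an odd number of times in a quadruple. -/
def par (t : (Fin ℓ × Fin ℓ) × (Fin ℓ × Fin ℓ)) : Finset (Fin ℓ) :=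
  symmDiff (symmDiff {t.1.1} {t.1.2}) (symmDiff {t.2.1} {t.2.2})

/-- The Walsh coefficient of the sum of squared autocorrelations at `T`. -/
def wt (T : Finset (Fin ℓ)) : ℕ := #{t ∈ quads ℓ | par t = T}

lemma seqOf_coe (ε : Fin ℓ → Bool) (i : Fin ℓ) :
    (seqOf ℓ ε (i : ℤ) : ℝ) = sgn (ε i) := by
  have h : (0 : ℤ) ≤ i ∧ ((i : ℕ) : ℤ) < ℓ := ⟨by positivity, by exact_mod_cast i.2⟩
  unfold seqOf sgn
  rw [dif_pos h]
  simp only [Int.toNat_natCast, Fin.eta]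
  split_ifs <;> simp

lemma seqOf_eq_zero (ε : Fin ℓ → Bool) {j : ℤ} (h : ¬(0 ≤ j ∧ j < (ℓ : ℤ))) :
    seqOf ℓ ε j = 0 := dif_neg h

lemma seqOf_eq_sum (ε : Fin ℓ → Bool) (j : ℤ) :
    (seqOf ℓ ε j : ℝ) = ∑ a : Fin ℓ, if (a : ℤ) = j then sgn (ε a) else 0 := by
  by_cases h : 0 ≤ j ∧ j < (ℓ : ℤ)
  · obtain ⟨n, rfl⟩ := Int.eq_ofNat_of_zero_le h.1
    have hn : n < ℓ := by exact_mod_cast h.2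
    have e : ∀ a : Fin ℓ, (((a : ℕ) : ℤ) = (n : ℤ)) ↔ a = ⟨n, hn⟩ := by
      intro a
      rw [Fin.ext_iff]
      simp
    simp only [e, sum_ite_eq', mem_univ, if_true]
    exact seqOf_coe ε ⟨n, hn⟩
  · rw [seqOf_eq_zero ε h, Int.cast_zero]
    symm
    refine sum_eq_zero fun a _ => if_neg ?_
    rintro rfl
    exact h ⟨by positivity, by exact_mod_cast a.2⟩

lemma autocorr_eq (ε : Fin ℓ → Bool) (s : ℤ) :
    (autocorr (seqOf ℓ ε) s : ℝ) =
      ∑ x : Fin ℓ × Fin ℓ, if (x.1 : ℤ) - x.2 = s then sgn (ε x.1) * sgn (ε x.2) else 0 := by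
  let e : Fin ℓ ↪ ℤ := ⟨fun i => (i : ℤ), fun i j h => Fin.ext (by simpa using h)⟩
  have h : autocorr (seqOf ℓ ε) s =
      ∑ j ∈ univ.map e, seqOf ℓ ε (j + s) * seqOf ℓ ε j := by
    refine finsum_eq_sum_of_support_subset _ fun j hj => ?_
    have h0 : 0 ≤ j ∧ j < (ℓ : ℤ) := by
      by_contra h0
      exact hj (by simp only [seqOf_eq_zero ε h0, mul_zero])
    simp only [coe_map, coe_univ, Set.image_univ, Set.mem_range]
    exact ⟨⟨j.toNat, by omega⟩, Int.toNat_of_nonneg h0.1⟩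
  rw [h, sum_map, Fintype.sum_prod_type_right]
  push_cast
  refine sum_congr rfl fun c _ => ?_
  have hc : (seqOf ℓ ε (e c) : ℝ) = sgn (ε c) := seqOf_coe ε c
  rw [hc, seqOf_eq_sum, sum_mul]
  refine sum_congr rfl fun a _ => ?_
  have : (((a : ℕ) : ℤ) = e c + s) ↔ ((a : ℤ) - c = s) := by
    change (((a : ℕ) : ℤ) = ((c : ℕ) : ℤ) + s) ↔ _
    omega
  simp only [this, ite_mul, zero_mul]

lemma support_autocorr (ε : Fin ℓ → Bool) :
    Function.support (fun s : ℤ => (autocorr (seqOf ℓ ε) s : ℝ) ^ 2) ⊆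
      (Finset.Icc (-(ℓ : ℤ)) ℓ : Finset ℤ) := by
  intro s hs
  by_contra h
  refine hs ?_
  simp only [autocorr_eq]
  rw [sum_eq_zero, zero_pow two_ne_zero]
  intro x _
  refine if_neg fun hx => h ?_
  have := x.1.2
  have := x.2.2
  rw [coe_Icc, Set.mem_Icc]
  omega

lemma chi_par (ε : Fin ℓ → Bool) (t : (Fin ℓ × Fin ℓ) × (Fin ℓ × Fin ℓ)) :
    chi (par t) ε = (sgn (ε t.1.1) * sgn (ε t.1.2)) * (sgn (ε t.2.1) * sgn (ε t.2.2)) := by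
  unfold par
  simp only [← chi_mul, chi_singleton]

/-- The Walsh expansion of the sum of squared autocorrelations. -/
lemma ssac_eq (ε : Fin ℓ → Bool) :
    ssac (seqOf ℓ ε) = walsh (fun T => (wt T : ℝ)) ε := by
  have h1 : ssac (seqOf ℓ ε) = ∑ t ∈ quads ℓ, chi (par t) ε := by
    unfold ssac
    rw [finsum_eq_sum_of_support_subset _ (support_autocorr ε)]
    simp only [autocorr_eq, sq, sum_mul_sum]
    have hq : ∑ t ∈ quads ℓ, chi (par t) ε = ∑ x : Fin ℓ × Fin ℓ, ∑ y : Fin ℓ × Fin ℓ,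
        if (x.1 : ℕ) + y.2 = y.1 + x.2 then chi (par (x, y)) ε else 0 := by
      unfold quads
      rw [sum_filter, Fintype.sum_prod_type]
    rw [hq, sum_comm]
    refine sum_congr rfl fun x _ => ?_
    rw [sum_comm]
    refine sum_congr rfl fun y _ => ?_
    have hx : (x.1 : ℤ) - x.2 ∈ Finset.Icc (-(ℓ : ℤ)) ℓ := by
      have := x.1.2
      have := x.2.2
      rw [Finset.mem_Icc]
      omega
    rw [sum_eq_single_of_mem (_ : ℤ) hx]
    · rw [if_pos rfl, chi_par, mul_ite, mul_zero]
      congr 1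
      rw [eq_iff_iff]
      omega
    · intro s _ hs
      rw [if_neg hs.symm, zero_mul]
  rw [h1, ← sum_fiberwise (quads ℓ) par]
  unfold walsh wt
  refine sum_congr rfl fun T _ => ?_
  rw [sum_congr rfl (g := fun _ => chi T ε)]
  · rw [sum_const, nsmul_eq_mul]
  · intro t ht
    rw [(mem_filter.1 ht).2]

lemma ADF_eq (ε : Fin ℓ → Bool) :
    ADF (seqOf ℓ ε) = (ssac (seqOf ℓ ε) - (ℓ : ℝ) ^ 2) / (ℓ : ℝ) ^ 2 := by
  have h0 : (autocorr (seqOf ℓ ε) 0 : ℝ) = ℓ := by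
    rw [autocorr_eq, Fintype.sum_prod_type]
    have : ∀ a b : Fin ℓ, ((a : ℤ) - b = 0) ↔ a = b := by
      intro a b
      rw [Fin.ext_iff]
      omega
    simp [this, sgn_mul_self]
  have h1 : ssac (seqOf ℓ ε) = (ℓ : ℝ) ^ 2 +
      ∑ᶠ s ∈ {s : ℤ | s ≠ 0}, ((autocorr (seqOf ℓ ε) s : ℝ)) ^ 2 := by
    have hins : (Set.univ : Set ℤ) = insert 0 {s : ℤ | s ≠ 0} := by
      ext s; simp [em]
    unfold ssac
    rw [← finsum_mem_univ, hins, finsum_mem_insert' _ (by simp), h0]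
    exact ((Finset.finite_toSet _).subset (support_autocorr ε)).subset Set.inter_subset_right
  unfold ADF
  rw [h0, h1]
  ring

lemma expect_eq (v : (ℤ → ℤ) → ℝ) : _root_.expect ℓ v = ex (fun ε => v (seqOf ℓ ε)) := rfl

lemma centralMoment_ADF (hℓ : 1 ≤ ℓ) (p : ℕ) :
    centralMoment p ℓ ADF = centralMoment p ℓ ssac / ((ℓ : ℝ) ^ 2) ^ p := by
  have hL : ((ℓ : ℝ) ^ 2) ≠ 0 := by positivity
  unfold centralMoment
  simp only [expect_eq]
  rw [← ex_div]
  congr 1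
  ext ε
  simp only [ADF_eq]
  rw [ex_div, ex_sub, ex_const, ← sub_div, sub_sub_sub_cancel_right, div_pow]

/-- The standardized moments do not see the affine relation between the demerit factor and the
sum of squared autocorrelations. -/
lemma ratio_eq (p : ℕ) (hℓ : 1 ≤ ℓ) :
    centralMoment p ℓ ADF / centralMoment 2 ℓ ADF ^ ((p : ℝ) / 2) =
      centralMoment p ℓ ssac / centralMoment 2 ℓ ssac ^ ((p : ℝ) / 2) := by
  have hL : 0 < ((ℓ : ℝ) ^ 2) := by positivity
  have h2 : 0 ≤ centralMoment 2 ℓ ssac := ex_nonneg fun _ => sq_nonneg _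
  rw [centralMoment_ADF hℓ, centralMoment_ADF hℓ, Real.div_rpow h2 (sq_nonneg _),
    ← Real.rpow_natCast ((ℓ : ℝ) ^ 2) 2,
    ← Real.rpow_mul hL.le, show ((2 : ℕ) : ℝ) * ((p : ℝ) / 2) = p by push_cast; ring,
    Real.rpow_natCast]
  exact div_div_div_cancel_right₀ (pow_pos hL p).ne' _ _

end Autocorrelation

/-! ### Counting the solutions of `a + b = c + d` -/

section Quadruples

variable {ℓ : ℕ}

lemma mem_quads {t : (Fin ℓ × Fin ℓ) × (Fin ℓ × Fin ℓ)} :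
    t ∈ quads ℓ ↔ (t.1.1 : ℕ) + t.2.2 = t.2.1 + t.1.2 := by
  simp [quads]

lemma par_subset (t : (Fin ℓ × Fin ℓ) × (Fin ℓ × Fin ℓ)) :
    par t ⊆ {t.1.1, t.1.2, t.2.1, t.2.2} := by
  intro i
  simp only [par, mem_symmDiff, mem_singleton, mem_insert]
  tauto

lemma card_par_le (t : (Fin ℓ × Fin ℓ) × (Fin ℓ × Fin ℓ)) : #(par t) ≤ 4 :=
  (card_le_card (par_subset t)).trans card_le_four

/-- A quadruple of odd support of size four has all its entries in that support. -/
lemma par_eq_of_card {t : (Fin ℓ × Fin ℓ) × (Fin ℓ × Fin ℓ)} (h : #(par t) = 4) :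
    par t = {t.1.1, t.1.2, t.2.1, t.2.2} :=
  eq_of_subset_of_card_le (par_subset t) (card_le_four.trans h.ge)

/-- All entries of a quadruple counted by `wt T` lie in `T`, which leaves `4 ^ 4` choices. -/
lemma wt_le {T : Finset (Fin ℓ)} (hT : #T = 4) : wt T ≤ 256 := by
  have : {t ∈ quads ℓ | par t = T} ⊆ (T ×ˢ T) ×ˢ (T ×ˢ T) := by
    intro t ht
    obtain ⟨_, rfl⟩ := mem_filter.1 ht
    have e := par_eq_of_card hT
    simp only [mem_product]
    rw [e]
    simp
  exact (card_le_card this).trans (by simp [card_product, hT])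

/-- Any three points lie in boundedly many supports of the degree-four part, since in a quadruple
each position is determined by the other three, as `p + q - r` in some order. -/
lemma codegree_le {S : Finset (Fin ℓ)} (hS : #S = 3) :
    #{T : Finset (Fin ℓ) | (if #T = 4 then (wt T : ℝ) else 0) ≠ 0 ∧ S ⊆ T} ≤ 27 := by
  obtain ⟨s, hs⟩ : S.Nonempty := card_pos.1 (by omega)
  have hℓ : 0 < ℓ := s.pos
  -- The residue modulo `ℓ` only serves to land in `Fin ℓ`.
  let g : (Fin ℓ × Fin ℓ) × Fin ℓ → Finset (Fin ℓ) := fun u =>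
    insert ⟨((u.1.1 : ℕ) + u.1.2 - u.2) % ℓ, Nat.mod_lt _ hℓ⟩ S
  have : ({T : Finset (Fin ℓ) | (if #T = 4 then (wt T : ℝ) else 0) ≠ 0 ∧ S ⊆ T} :
      Finset (Finset (Fin ℓ))) ⊆
      ((S ×ˢ S) ×ˢ S).image g := by
    intro T hT
    obtain ⟨h0, hST⟩ := (mem_filter.1 hT).2
    have hT4 : #T = 4 := by
      by_contra h
      exact h0 (if_neg h)
    rw [if_pos hT4, Nat.cast_ne_zero] at h0
    obtain ⟨t, ht⟩ := card_pos.1 (Nat.pos_of_ne_zero h0)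
    obtain ⟨htq, rfl⟩ := mem_filter.1 ht
    have hsum := mem_quads.1 htq
    obtain ⟨x, hx⟩ : ∃ x, par t \ S = {x} := by
      rw [← card_eq_one, card_sdiff_of_subset hST]
      omega
    have hxS : x ∉ S := (mem_sdiff.1 (hx ▸ mem_singleton_self x : x ∈ par t \ S)).2
    have hins : par t = insert x S := by
      rw [← sdiff_union_of_subset hST, hx, singleton_union]
    have hmem : ∀ y ∈ par t, y = x ∨ y ∈ S := by
      intro y hy
      rw [hins] at hy
      exact mem_insert.1 hy
    have e := par_eq_of_card hT4
    have hxe : x ∈ par t := hins ▸ mem_insert_self x S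
    have hcard := hT4
    rw [e] at hcard
    have key : ∃ p q r : Fin ℓ, p ∈ S ∧ q ∈ S ∧ r ∈ S ∧ (x : ℕ) = (p : ℕ) + q - r := by
      obtain ⟨⟨a, c⟩, d, b⟩ := t
      simp only at hsum e hcard
      have hac : a ≠ c := by
        rintro rfl
        have := card_le_three (a := a) (b := d) (c := b)
        simp at hcard
        omega
      have had : a ≠ d := by
        rintro rfl
        have := card_le_three (a := a) (b := c) (c := b)
        rw [show ({a, c, a, b} : Finset (Fin ℓ)) = {a, c, b} by ext; simp; tauto] at hcard
        omega
      have hab : a ≠ b := by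
        rintro rfl
        have := card_le_three (a := a) (b := c) (c := d)
        rw [show ({a, c, d, a} : Finset (Fin ℓ)) = {a, c, d} by ext; simp; tauto] at hcard
        omega
      have hcd : c ≠ d := by
        rintro rfl
        have := card_le_three (a := a) (b := c) (c := b)
        simp at hcard
        omega
      have hcb : c ≠ b := by
        rintro rfl
        have := card_le_three (a := a) (b := c) (c := d)
        rw [show ({a, c, d, c} : Finset (Fin ℓ)) = {a, c, d} by ext; simp; tauto] at hcard
        omega
      have hdb : d ≠ b := by
        rintro rfl
        have := card_le_three (a := a) (b := c) (c := d)
        simp at hcard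
        omega
      have ha := hmem a (by rw [e]; simp)
      have hb := hmem b (by rw [e]; simp)
      have hc := hmem c (by rw [e]; simp)
      have hd := hmem d (by rw [e]; simp)
      rw [e] at hxe
      simp only [mem_insert, mem_singleton] at hxe
      rcases hxe with rfl | rfl | rfl | rfl
      · exact ⟨d, c, b, hd.resolve_left had.symm, hc.resolve_left hac.symm,
          hb.resolve_left hab.symm, by omega⟩
      · exact ⟨a, b, d, ha.resolve_left hac, hb.resolve_left hcb.symm,
          hd.resolve_left hcd.symm, by omega⟩
      · exact ⟨a, b, c, ha.resolve_left had, hb.resolve_left hdb.symm,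
          hc.resolve_left hcd, by omega⟩
      · exact ⟨d, c, a, hd.resolve_left hdb, hc.resolve_left hcb,
          ha.resolve_left hab, by omega⟩
    obtain ⟨p, q, r, hp, hq, hr, hv⟩ := key
    refine mem_image.2 ⟨((p, q), r), by simp [hp, hq, hr], ?_⟩
    change insert _ S = _
    rw [hins]
    congr 1
    ext
    change ((p : ℕ) + q - r) % ℓ = x
    rw [← hv, Nat.mod_eq_of_lt x.2]
  calc _ ≤ #(((S ×ˢ S) ×ˢ S).image g) := card_le_card this
    _ ≤ #((S ×ˢ S) ×ˢ S) := card_image_le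
    _ = 27 := by simp [card_product, hS]

lemma card_par_eq_four {a b c d : Fin ℓ} (hac : a ≠ c) (had : a ≠ d) (hab : a ≠ b)
    (hcd : c ≠ d) (hcb : c ≠ b) (hdb : d ≠ b) : #(par ((a, c), (d, b))) = 4 := by
  have e1 : symmDiff {a} {c} = ({a, c} : Finset (Fin ℓ)) :=
    (disjoint_singleton.2 hac).symmDiff_eq_sup
  have e2 : symmDiff {d} {b} = ({d, b} : Finset (Fin ℓ)) :=
    (disjoint_singleton.2 hdb).symmDiff_eq_sup
  have e3 : Disjoint ({a, c} : Finset (Fin ℓ)) {d, b} := by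
    simp only [disjoint_insert_left, disjoint_singleton_left, mem_insert, mem_singleton, not_or]
    exact ⟨⟨had, hab⟩, hcd, hcb⟩
  change #(symmDiff (symmDiff {a} {c}) (symmDiff {d} {b})) = 4
  rw [e1, e2, e3.symmDiff_eq_sup, sup_eq_union, card_union_of_disjoint e3, card_pair hac,
    card_pair hdb]

/-- In a quadruple that cancels partly, two positions on the same side of `a + b = d + c` agree,
and the two positions on the other side survive. -/
lemma par_degenerate {t : (Fin ℓ × Fin ℓ) × (Fin ℓ × Fin ℓ)} (ht : t ∈ quads ℓ)
    (h0 : par t ≠ ∅) (h4 : #(par t) ≠ 4) :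
    (t.1.1 = t.2.2 ∧ t.1.2 ∈ par t ∧ t.2.1 ∈ par t) ∨
      (t.1.2 = t.2.1 ∧ t.1.1 ∈ par t ∧ t.2.2 ∈ par t) := by
  obtain ⟨⟨a, c⟩, d, b⟩ := t
  have hs := mem_quads.1 ht
  simp only at hs ⊢
  by_cases hac : a = c
  · have hdb : d = b := by ext; subst hac; omega
    subst hac hdb
    simp [par] at h0
  by_cases had : a = d
  · have hcb : c = b := by ext; subst had; omega
    subst had hcb
    simp [par] at h0
  have hdb : d ≠ b := by rintro rfl; exact hac (Fin.ext (by omega))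
  have hcb : c ≠ b := by rintro rfl; exact had (Fin.ext (by omega))
  by_cases hab : a = b
  · left
    subst hab
    have hcd : c ≠ d := by
      rintro rfl
      apply h0
      ext i
      simp only [par, mem_symmDiff, mem_singleton, notMem_empty, iff_false]
      tauto
    simp only [par, mem_symmDiff, mem_singleton, true_and]
    tauto
  by_cases hcd : c = d
  · right
    subst hcd
    simp only [par, mem_symmDiff, mem_singleton, true_and]
    tauto
  · exact absurd (card_par_eq_four hac had hab hcd hcb hdb) h4

/-- A quadruple with `a = b` is determined by `c` and `d`. -/
lemma card_quads_left (T U : Finset (Fin ℓ)) :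
    #{t ∈ quads ℓ | t.1.1 = t.2.2 ∧ t.1.2 ∈ T ∧ t.2.1 ∈ U} ≤ #T * #U := by
  rw [← card_product]
  refine card_le_card_of_injOn (fun t => (t.1.2, t.2.1)) ?_ ?_
  · intro t ht
    have := (mem_filter.1 ht).2
    simp [this.2.1, this.2.2]
  · rintro ⟨⟨a, c⟩, d, b⟩ h ⟨⟨a', c'⟩, d', b'⟩ h' e
    have h1 := mem_filter.1 h
    have h2 := mem_filter.1 h'
    have h3 := mem_quads.1 h1.1
    have h4 := mem_quads.1 h2.1
    simp only [Prod.mk.injEq] at e h1 h2 h3 h4 ⊢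
    obtain ⟨rfl, rfl⟩ := e
    obtain rfl := h1.2.1
    obtain rfl := h2.2.1
    have : a = a' := Fin.ext (by omega)
    simp [this]

/-- A quadruple with `c = d` is determined by `a` and `b`. -/
lemma card_quads_right (T U : Finset (Fin ℓ)) :
    #{t ∈ quads ℓ | t.1.2 = t.2.1 ∧ t.1.1 ∈ T ∧ t.2.2 ∈ U} ≤ #T * #U := by
  rw [← card_product]
  refine card_le_card_of_injOn (fun t => (t.1.1, t.2.2)) ?_ ?_
  · intro t ht
    have := (mem_filter.1 ht).2
    simp [this.2.1, this.2.2]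
  · rintro ⟨⟨a, c⟩, d, b⟩ h ⟨⟨a', c'⟩, d', b'⟩ h' e
    have h1 := mem_filter.1 h
    have h2 := mem_filter.1 h'
    have h3 := mem_quads.1 h1.1
    have h4 := mem_quads.1 h2.1
    simp only [Prod.mk.injEq] at e h1 h2 h3 h4 ⊢
    obtain ⟨rfl, rfl⟩ := e
    obtain rfl := h1.2.1
    obtain rfl := h2.2.1
    have : c = c' := Fin.ext (by omega)
    simp [this]

/-- The degree-four part of the Walsh expansion. -/
def top (ℓ : ℕ) (T : Finset (Fin ℓ)) : ℝ := if #T = 4 then (wt T : ℝ) else 0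

/-- The Walsh expansion without its constant term and its degree-four part. -/
def low (ℓ : ℕ) (T : Finset (Fin ℓ)) : ℝ := if T = ∅ ∨ #T = 4 then 0 else (wt T : ℝ)

lemma low_le {T : Finset (Fin ℓ)} : low ℓ T ≤ 32 := by
  unfold low
  split_ifs with h
  · norm_num
  push Not at h
  have hsub : {t ∈ quads ℓ | par t = T} ⊆
      {t ∈ quads ℓ | t.1.1 = t.2.2 ∧ t.1.2 ∈ T ∧ t.2.1 ∈ T} ∪
        {t ∈ quads ℓ | t.1.2 = t.2.1 ∧ t.1.1 ∈ T ∧ t.2.2 ∈ T} := by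
    intro t ht
    obtain ⟨hq, rfl⟩ := mem_filter.1 ht
    simp only [mem_union, mem_filter, hq, true_and]
    exact par_degenerate hq h.1.ne_empty h.2
  have hle : wt T ≤ #T * #T + #T * #T :=
    (card_le_card hsub).trans ((card_union_le _ _).trans
      (add_le_add (card_quads_left T T) (card_quads_right T T)))
  have : wt T ≤ 32 := by
    rcases Nat.eq_zero_or_pos (wt T) with h0 | h0
    · omega
    · obtain ⟨t, ht⟩ := card_pos.1 h0
      have hT : #T ≤ 4 := (mem_filter.1 ht).2 ▸ card_par_le t
      nlinarith
  exact_mod_cast this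

lemma low_nonneg {T : Finset (Fin ℓ)} : 0 ≤ low ℓ T := by
  unfold low
  split_ifs <;> positivity

/-- The part below degree four has variance of order at most `ℓ ^ 2`: its coefficients are bounded
and count quadruples with only two free positions. -/
lemma sum_low_sq (ℓ : ℕ) : ∑ T, low ℓ T ^ 2 ≤ 64 * (ℓ : ℝ) ^ 2 := by
  let D : Finset ((Fin ℓ × Fin ℓ) × (Fin ℓ × Fin ℓ)) :=
    {t ∈ quads ℓ | t.1.1 = t.2.2 ∧ t.1.2 ∈ (univ : Finset (Fin ℓ)) ∧
        t.2.1 ∈ (univ : Finset (Fin ℓ))} ∪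
      {t ∈ quads ℓ | t.1.2 = t.2.1 ∧ t.1.1 ∈ (univ : Finset (Fin ℓ)) ∧
        t.2.2 ∈ (univ : Finset (Fin ℓ))}
  have hD : #D ≤ 2 * ℓ ^ 2 := by
    have h1 := card_quads_left (univ : Finset (Fin ℓ)) univ
    have h2 := card_quads_right (univ : Finset (Fin ℓ)) univ
    rw [card_fin] at h1 h2
    exact (card_union_le _ _).trans (by linarith)
  have hle : ∀ T, low ℓ T ≤ (#{t ∈ D | par t = T} : ℝ) := by
    intro T
    unfold low
    split_ifs with h
    · positivity
    push Not at h
    refine Nat.cast_le.2 (card_le_card fun t ht => ?_)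
    obtain ⟨hq, rfl⟩ := mem_filter.1 ht
    simp only [D, mem_filter, mem_union, hq, true_and, mem_univ, and_true]
    exact (par_degenerate hq h.1.ne_empty h.2).imp And.left And.left
  calc ∑ T, low ℓ T ^ 2 ≤ ∑ T, 32 * (#{t ∈ D | par t = T} : ℝ) := by
        refine sum_le_sum fun T _ => ?_
        rw [sq]
        exact mul_le_mul low_le (hle T) low_nonneg (by norm_num)
    _ = 32 * (#D : ℝ) := by
        rw [← mul_sum, card_eq_sum_card_fiberwise (f := par) (s := D) (t := univ)
          (fun _ _ => mem_coe.2 (mem_univ _))]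
        push_cast
        rfl
    _ ≤ 32 * (2 * (ℓ : ℝ) ^ 2) := by
        gcongr
        exact_mod_cast hD
    _ = 64 * (ℓ : ℝ) ^ 2 := by ring

/-- There are at least `(ℓ / 5) ^ 3` quadruples with four distinct positions. -/
lemma cube_le_card (ℓ : ℕ) : (ℓ / 5) ^ 3 ≤ #{t ∈ quads ℓ | #(par t) = 4} := by
  have hm : 5 * (ℓ / 5) ≤ ℓ := Nat.mul_div_le ℓ 5
  generalize ℓ / 5 = m at hm
  -- Take `a`, `c`, `d` in three consecutive blocks of length `m`; then `b = c + d - a` is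
  -- larger than all of them.
  let g : Fin m × Fin m × Fin m → (Fin ℓ × Fin ℓ) × (Fin ℓ × Fin ℓ) := fun u =>
    ((⟨u.1, by omega⟩, ⟨m + u.2.1, by omega⟩),
      (⟨2 * m + u.2.2, by omega⟩, ⟨3 * m + u.2.1 + u.2.2 - u.1, by omega⟩))
  have h := card_le_card_of_injOn (s := univ) (t := {t ∈ quads ℓ | #(par t) = 4}) g ?_ ?_
  · simpa [card_univ, Fintype.card_prod, pow_succ, mul_assoc] using h
  · rintro ⟨x, y, z⟩ _
    rw [mem_coe, mem_filter, mem_quads]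
    refine ⟨?_, card_par_eq_four ?_ ?_ ?_ ?_ ?_ ?_⟩
    · simp only [g]; omega
    all_goals
      rw [Ne, Fin.ext_iff]
      simp only
      omega
  · rintro ⟨x, y, z⟩ _ ⟨x', y', z'⟩ _ e
    simp only [g, Prod.mk.injEq, Fin.mk.injEq] at e
    simp only [Prod.mk.injEq, Fin.ext_iff]
    omega

lemma sum_top_sq (ℓ : ℕ) : (((ℓ / 5 : ℕ) : ℝ)) ^ 3 ≤ ∑ T, top ℓ T ^ 2 := by
  have h1 : (((ℓ / 5 : ℕ) : ℝ)) ^ 3 ≤ (#{t ∈ quads ℓ | #(par t) = 4} : ℝ) := by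
    exact_mod_cast cube_le_card ℓ
  refine h1.trans ?_
  rw [card_eq_sum_card_fiberwise (f := par) (t := univ) (fun _ _ => mem_coe.2 (mem_univ _))]
  push_cast
  refine sum_le_sum fun T _ => ?_
  unfold top
  split_ifs with h
  · have h2 : #{t ∈ {t ∈ quads ℓ | #(par t) = 4} | par t = T} ≤ wt T :=
      card_le_card (filter_subset_filter _ (filter_subset _ _))
    have h3 : wt T ≤ wt T ^ 2 := Nat.le_self_pow two_ne_zero _
    exact_mod_cast h2.trans h3
  · rw [filter_eq_empty_iff.2]
    · simp
    · rintro t ht rfl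
      exact h (mem_filter.1 ht).2

lemma eventually_sum_top_sq :
    ∀ᶠ ℓ : ℕ in atTop, (1 / 1000) * (ℓ : ℝ) ^ 3 ≤ ∑ T, top ℓ T ^ 2 := by
  filter_upwards [eventually_ge_atTop 10] with ℓ hℓ
  refine le_trans ?_ (sum_top_sq ℓ)
  have h : (ℓ : ℝ) ≤ 10 * ((ℓ / 5 : ℕ) : ℝ) := by
    have : ℓ ≤ 10 * (ℓ / 5) := by omega
    exact_mod_cast this
  calc (1 / 1000) * (ℓ : ℝ) ^ 3 ≤ (1 / 1000) * (10 * ((ℓ / 5 : ℕ) : ℝ)) ^ 3 := by gcongr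
    _ = _ := by ring

/-- The centred sum of squared autocorrelations splits into its degree-four part and the rest. -/
lemma centralMoment_ssac (p ℓ : ℕ) :
    centralMoment p ℓ ssac = ex (fun ε => (walsh (top ℓ) ε + walsh (low ℓ) ε) ^ p) := by
  unfold centralMoment
  simp only [expect_eq, ssac_eq]
  congr 1
  ext ε
  congr 1
  rw [ex_walsh]
  have h : ∀ T : Finset (Fin ℓ),
      (wt T : ℝ) = (if T = ∅ then (wt T : ℝ) else 0) + (top ℓ T + low ℓ T) := by
    intro T
    unfold top low
    by_cases h0 : T = ∅
    · subst h0
      simp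
    · by_cases h4 : #T = 4 <;> simp [h0, h4]
  have h1 : walsh (fun T : Finset (Fin ℓ) => (wt T : ℝ)) ε =
      (wt (∅ : Finset (Fin ℓ)) : ℝ) + (walsh (top ℓ) ε + walsh (low ℓ) ε) := by
    unfold walsh
    rw [sum_congr rfl fun T _ => congrArg (· * chi T ε) (h T)]
    simp only [add_mul, sum_add_distrib, ite_mul, zero_mul, sum_ite_eq', mem_univ, if_true]
    simp [chi]
  rw [h1, add_sub_cancel_left]

lemma low_ne_zero {T : Finset (Fin ℓ)} (h : low ℓ T ≠ 0) : #T ≤ 4 := by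
  have h0 : wt T ≠ 0 := by
    intro h0
    apply h
    simp [low, h0]
  obtain ⟨t, ht⟩ := card_pos.1 (Nat.pos_of_ne_zero h0)
  exact (mem_filter.1 ht).2 ▸ card_par_le t

lemma tendsto_ADF (p : ℕ) :
    Tendsto (fun ℓ : ℕ => centralMoment p ℓ ADF / centralMoment 2 ℓ ADF ^ ((p : ℝ) / 2))
      atTop (nhds (mom p)) := by
  have key := tendsto_standardized (t := top) (r := low) (K := 27) (κ := 256) (c₀ := 1 / 1000)
    (D := 64) (by norm_num) ?_ (fun _ _ => low_ne_zero) ?_ (fun _ _ => codegree_le) sum_low_sq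
    eventually_sum_top_sq p
  · refine key.congr' ?_
    filter_upwards [eventually_ge_atTop 1] with ℓ hℓ
    rw [ratio_eq p hℓ, centralMoment_ssac, centralMoment_ssac]
  · intro ℓ T hT
    by_contra h
    exact hT (if_neg h)
  · intro ℓ T
    unfold top
    split_ifs with h
    · rw [abs_of_nonneg (by positivity)]
      exact_mod_cast wt_le h
    · norm_num

end Quadruples

/-- The `p`-th standardized moment of the demerit factor equals that of `ssac`,
and converges, as `ℓ → ∞`, to `0` for odd `p` and to `(p-1)‼` for even `p`
(the standardized moments of the standard normal distribution). -/
theorem standardized_moment_limit (p : ℕ) :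
    (∀ ℓ : ℕ, 1 ≤ ℓ →
      centralMoment p ℓ ADF / centralMoment 2 ℓ ADF ^ ((p : ℝ) / 2) =
        centralMoment p ℓ ssac / centralMoment 2 ℓ ssac ^ ((p : ℝ) / 2)) ∧
    (Odd p →
      Tendsto
        (fun ℓ : ℕ => centralMoment p ℓ ADF / centralMoment 2 ℓ ADF ^ ((p : ℝ) / 2))
        atTop (nhds 0)) ∧
    (Even p →
      Tendsto
        (fun ℓ : ℕ => centralMoment p ℓ ADF / centralMoment 2 ℓ ADF ^ ((p : ℝ) / 2))
        atTop (nhds (Nat.doubleFactorial (p - 1) : ℝ))) := by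
  refine ⟨fun ℓ hℓ => ratio_eq p hℓ, ?_, ?_⟩
  · rintro ⟨k, rfl⟩
    have h := tendsto_ADF (2 * k + 1)
    rwa [mom_odd] at h
  · rintro ⟨k, rfl⟩
    rw [← two_mul]
    have h := tendsto_ADF (2 * k)
    rwa [mom_even] at h
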